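/- arXiv:1808.00285 — 6 statements merged into one kernel-verified Lean document; each statement's English description precedes it below -/
import Mathlib

section
/- Let 0 < m < M, let A, B be positive invertible bounded operators on a complex Hilbert space H with m·A ≤ B ≤ M·A, let φ : B(H) → B(K) be a positive linear map such that φ(A) is positive and invertible, and let t < 0. Then (1/K(m,M,t)) · φ(A ♯_t B) ≤ (1/K(m,M,t)) · φ(A σ_g B) ≤ φ(A) ♯_t φ(B) ≤ φ(A) σ_g φ(B) ≤ K(m,M,t) · φ(A ♯_t B), where g(x) = (M^{x-m} m^{M-x})^{t/(M-m)} and K(m,M,t) = ((m M^t − M m^t)/((t−1)(M−m))) · (((t−1)/t) · (M^t − m^t)/(m M^t − M m^t))^t. -/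
/-!
Write `L` for the chord of `x ↦ x ^ t` over `[m, M]`. On scalars there is the chain
`x ^ t ≤ g x ≤ L x ≤ K x ^ t` for `x ∈ [m, M]`, where `g` is the geometric interpolation of the
endpoint values:
* `x ^ t ≤ g x` because `x ^ t` is log-convex for `t < 0` (`rpow_le_geomChord`);
* `g x ≤ L x` is the weighted AM-GM inequality (`geomChord_le_chord`);
* `L x ≤ K x ^ t` is Bernoulli's inequality `1 + t (u - 1) ≤ u ^ t`, after scaling `x` by the
  critical point of `x ↦ L x / x ^ t` (`chord_le_kantorovich`).

The functional calculus turns each scalar inequality into one between the operator expressions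
`A σ_h B`, since `m A ≤ B ≤ M A` puts the spectrum of `A^{-1/2} B A^{-1/2}` in `[m, M]`
(`opSigma_mono`); positivity of `φ` gives `m φ(A) ≤ φ(B) ≤ M φ(A)`, so the same applies to
`φ(A), φ(B)`. As `L` is affine, `A σ_L B` is a linear combination of `A` and `B`
(`opSigma_affine`), whence `φ(A σ_L B) = φ(A) σ_L φ(B)`. Passing through this common value links
the two sides in the second and the fourth inequality.
-/

noncomputable def opSqrt {H : Type*} [NormedAddCommGroup H] [InnerProductSpace ℂ H]
    [CompleteSpace H] (A : H →L[ℂ] H) : H →L[ℂ] H :=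
  cfc (fun s : ℝ => s ^ ((1 : ℝ) / 2)) A

noncomputable def opInvSqrt {H : Type*} [NormedAddCommGroup H] [InnerProductSpace ℂ H]
    [CompleteSpace H] (A : H →L[ℂ] H) : H →L[ℂ] H :=
  cfc (fun s : ℝ => s ^ (-(1 : ℝ) / 2)) A

/-- `A δ B = A^{-1/2} B A^{-1/2}`. -/
noncomputable def opDelta {H : Type*} [NormedAddCommGroup H] [InnerProductSpace ℂ H]
    [CompleteSpace H] (A B : H →L[ℂ] H) : H →L[ℂ] H :=
  opInvSqrt A * B * opInvSqrt A

/-- `A σ_h B = A^{1/2} h(A^{-1/2} B A^{-1/2}) A^{1/2}`. -/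
noncomputable def opSigma {H : Type*} [NormedAddCommGroup H] [InnerProductSpace ℂ H]
    [CompleteSpace H] (h : ℝ → ℝ) (A B : H →L[ℂ] H) : H →L[ℂ] H :=
  opSqrt A * cfc h (opDelta A B) * opSqrt A

/-- The weighted geometric mean `A ♯_t B = A^{1/2} (A^{-1/2} B A^{-1/2})^t A^{1/2}`. -/
noncomputable def opGeom {H : Type*} [NormedAddCommGroup H] [InnerProductSpace ℂ H]
    [CompleteSpace H] (t : ℝ) (A B : H →L[ℂ] H) : H →L[ℂ] H :=
  opSigma (fun s : ℝ => s ^ t) A B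

/-! ### Scalar inequalities -/

section Scalar

/-- Log-convexity of `x ↦ x ^ t` for `t < 0`: it lies below its geometric interpolation. -/
lemma rpow_le_geomChord {m M t x : ℝ} (hm : 0 < m) (hmM : m < M) (ht : t < 0)
    (hx : x ∈ Set.Icc m M) :
    x ^ t ≤ (M ^ (x - m) * m ^ (M - x)) ^ (t / (M - m)) := by
  have hM : 0 < M := hm.trans hmM
  have hd : 0 < M - m := sub_pos.2 hmM
  have hx0 : 0 < x := hm.trans_le hx.1
  have h1 : (M ^ (x - m) * m ^ (M - x)) ^ (t / (M - m))
      = (M ^ ((x - m) / (M - m)) * m ^ ((M - x) / (M - m))) ^ t := by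
    rw [Real.mul_rpow (by positivity) (by positivity),
      Real.mul_rpow (by positivity) (by positivity), ← Real.rpow_mul hM.le, ← Real.rpow_mul hm.le,
      ← Real.rpow_mul hM.le, ← Real.rpow_mul hm.le]
    congr 2 <;> ring
  have h2 : M ^ ((x - m) / (M - m)) * m ^ ((M - x) / (M - m)) ≤ x := by
    refine (Real.geom_mean_le_arith_mean2_weighted
      (div_nonneg (sub_nonneg.2 hx.1) hd.le) (div_nonneg (sub_nonneg.2 hx.2) hd.le)
      hM.le hm.le (by field_simp; ring)).trans_eq ?_
    field_simp
    ring
  rw [h1]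
  exact Real.rpow_le_rpow_of_nonpos (by positivity) h2 ht.le

lemma geomChord_le_chord {m M t x : ℝ} (hm : 0 < m) (hmM : m < M)
    (hx : x ∈ Set.Icc m M) :
    (M ^ (x - m) * m ^ (M - x)) ^ (t / (M - m)) ≤
      (M * m ^ t - m * M ^ t) / (M - m) + (M ^ t - m ^ t) / (M - m) * x := by
  have hM : 0 < M := hm.trans hmM
  have hd : 0 < M - m := sub_pos.2 hmM
  have h1 : (M ^ (x - m) * m ^ (M - x)) ^ (t / (M - m))
      = (M ^ t) ^ ((x - m) / (M - m)) * (m ^ t) ^ ((M - x) / (M - m)) := by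
    rw [Real.mul_rpow (by positivity) (by positivity), ← Real.rpow_mul hM.le,
      ← Real.rpow_mul hm.le, ← Real.rpow_mul hM.le, ← Real.rpow_mul hm.le]
    congr 2 <;> ring
  rw [h1]
  refine (Real.geom_mean_le_arith_mean2_weighted
    (div_nonneg (sub_nonneg.2 hx.1) hd.le) (div_nonneg (sub_nonneg.2 hx.2) hd.le)
    (by positivity) (by positivity) (by field_simp; ring)).trans_eq ?_
  field_simp
  ring

/-- Bernoulli's inequality for a negative exponent. -/
lemma bernoulli_neg {t u : ℝ} (ht : t < 0) (hu : 0 < u) : 1 + t * (u - 1) ≤ u ^ t := by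
  rw [Real.rpow_def_of_pos hu]
  nlinarith [Real.add_one_le_exp (Real.log u * t), Real.log_le_sub_one_of_pos hu]

/-- The chord of `x ↦ x ^ t` has negative slope and positive value at `0`: the two quantities below
are `M - m` times its slope and `-(M - m)` times its value at `0`. -/
lemma chord_signs {m M t : ℝ} (hm : 0 < m) (hmM : m < M) (ht : t < 0) :
    M ^ t - m ^ t < 0 ∧ m * M ^ t - M * m ^ t < 0 := by
  have h := Real.rpow_lt_rpow_of_neg hm hmM ht
  have h' : 0 < m ^ t := Real.rpow_pos_of_pos hm t
  exact ⟨by linarith, by nlinarith⟩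

lemma kantorovich_pos {m M t : ℝ} (hm : 0 < m) (hmM : m < M) (ht : t < 0) :
    0 < (m * M ^ t - M * m ^ t) / ((t - 1) * (M - m)) *
      ((t - 1) / t * ((M ^ t - m ^ t) / (m * M ^ t - M * m ^ t))) ^ t := by
  obtain ⟨h1, h2⟩ := chord_signs hm hmM ht
  have hd : 0 < M - m := sub_pos.2 hmM
  exact mul_pos (div_pos_of_neg_of_neg h2 (mul_neg_of_neg_of_pos (by linarith) hd))
    (Real.rpow_pos_of_pos (mul_pos (div_pos_of_neg_of_neg (by linarith) ht)
      (div_pos_of_neg_of_neg h1 h2)) _)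

lemma chord_le_kantorovich {m M t x : ℝ} (hm : 0 < m) (hmM : m < M) (ht : t < 0) (hx : 0 < x) :
    (M * m ^ t - m * M ^ t) / (M - m) + (M ^ t - m ^ t) / (M - m) * x ≤
      (m * M ^ t - M * m ^ t) / ((t - 1) * (M - m)) *
        ((t - 1) / t * ((M ^ t - m ^ t) / (m * M ^ t - M * m ^ t))) ^ t * x ^ t := by
  obtain ⟨h1, h2⟩ := chord_signs hm hmM ht
  have hd : 0 < M - m := sub_pos.2 hmM
  have ht1 : t - 1 < 0 := by linarith
  -- `c` is the reciprocal of the point where the chord divided by `x ^ t` is maximal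
  set c := (t - 1) / t * ((M ^ t - m ^ t) / (m * M ^ t - M * m ^ t)) with hc
  have hc0 : 0 < c := mul_pos (div_pos_of_neg_of_neg ht1 ht) (div_pos_of_neg_of_neg h1 h2)
  have hb := bernoulli_neg ht (mul_pos hc0 hx)
  have hp : 0 < (m * M ^ t - M * m ^ t) / ((t - 1) * (M - m)) :=
    div_pos_of_neg_of_neg h2 (mul_neg_of_neg_of_pos ht1 hd)
  rw [mul_assoc, ← Real.mul_rpow hc0.le hx.le]
  refine le_trans (le_of_eq ?_) (mul_le_mul_of_nonneg_left hb hp.le)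
  have := h2.ne
  have := ht.ne
  have := ht1.ne
  rw [hc]
  generalize m ^ t = p at *
  generalize M ^ t = q at *
  field_simp
  ring

lemma continuous_geomChord {m M : ℝ} (t : ℝ) (hm : 0 < m) (hM : 0 < M) :
    Continuous fun x : ℝ => (M ^ (x - m) * m ^ (M - x)) ^ (t / (M - m)) := by
  have h1 : Continuous fun x : ℝ => M ^ (x - m) :=
    (Real.continuous_const_rpow hM.ne').comp (by fun_prop)
  have h2 : Continuous fun x : ℝ => m ^ (M - x) :=
    (Real.continuous_const_rpow hm.ne').comp (by fun_prop)
  exact (h1.mul h2).rpow_const fun x =>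
    Or.inl (mul_pos (Real.rpow_pos_of_pos hM _) (Real.rpow_pos_of_pos hm _)).ne'

end Scalar

/-! ### Functional calculus for pairs of positive operators -/

section Operator

variable {H : Type*} [NormedAddCommGroup H] [InnerProductSpace ℂ H] [CompleteSpace H]

lemma spectrum_pos_of_isUnit {A : H →L[ℂ] H} (hA : 0 ≤ A) (hAu : IsUnit A) {x : ℝ}
    (hx : x ∈ spectrum ℝ A) : 0 < x := by
  refine (spectrum_nonneg_of_nonneg hA hx).lt_of_ne ?_
  rintro rfl
  exact spectrum.zero_notMem ℝ hAu hx

lemma continuousOn_rpow_spectrum {A : H →L[ℂ] H} (hA : 0 ≤ A) (hAu : IsUnit A) (r : ℝ) :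
    ContinuousOn (fun s : ℝ => s ^ r) (spectrum ℝ A) := fun _ hx =>
  (Real.continuousAt_rpow_const _ _
    (Or.inl (spectrum_pos_of_isUnit hA hAu hx).ne')).continuousWithinAt

lemma cfc_rpow_mul_cfc_rpow {A : H →L[ℂ] H} (hA : 0 ≤ A) (hAu : IsUnit A) (r s : ℝ) :
    cfc (fun x : ℝ => x ^ r) A * cfc (fun x : ℝ => x ^ s) A = cfc (fun x : ℝ => x ^ (r + s)) A := by
  rw [← cfc_mul _ _ A (continuousOn_rpow_spectrum hA hAu r) (continuousOn_rpow_spectrum hA hAu s)]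
  exact cfc_congr fun x hx => (Real.rpow_add (spectrum_pos_of_isUnit hA hAu hx) r s).symm

lemma opSqrt_mul_self {A : H →L[ℂ] H} (hA : 0 ≤ A) (hAu : IsUnit A) :
    opSqrt A * opSqrt A = A := by
  have hsa : IsSelfAdjoint A := .of_nonneg hA
  rw [opSqrt, cfc_rpow_mul_cfc_rpow hA hAu]
  norm_num
  exact cfc_id' ℝ A

lemma opSqrt_mul_opInvSqrt {A : H →L[ℂ] H} (hA : 0 ≤ A) (hAu : IsUnit A) :
    opSqrt A * opInvSqrt A = 1 := by
  have hsa : IsSelfAdjoint A := .of_nonneg hA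
  rw [opSqrt, opInvSqrt, cfc_rpow_mul_cfc_rpow hA hAu]
  norm_num
  exact cfc_const_one ℝ A

lemma opInvSqrt_mul_opSqrt {A : H →L[ℂ] H} (hA : 0 ≤ A) (hAu : IsUnit A) :
    opInvSqrt A * opSqrt A = 1 := by
  have hsa : IsSelfAdjoint A := .of_nonneg hA
  rw [opSqrt, opInvSqrt, cfc_rpow_mul_cfc_rpow hA hAu]
  norm_num
  exact cfc_const_one ℝ A

lemma isSelfAdjoint_opSqrt (A : H →L[ℂ] H) : IsSelfAdjoint (opSqrt A) := cfc_predicate _ _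

lemma isSelfAdjoint_opInvSqrt (A : H →L[ℂ] H) : IsSelfAdjoint (opInvSqrt A) := cfc_predicate _ _

lemma isSelfAdjoint_opDelta {A B : H →L[ℂ] H} (hB : 0 ≤ B) : IsSelfAdjoint (opDelta A B) :=
  .of_nonneg ((isSelfAdjoint_opInvSqrt A).conjugate_nonneg hB)

lemma opDelta_self {A : H →L[ℂ] H} (hA : 0 ≤ A) (hAu : IsUnit A) : opDelta A A = 1 := by
  calc opDelta A A = opInvSqrt A * (opSqrt A * opSqrt A) * opInvSqrt A := by
        rw [opSqrt_mul_self hA hAu, opDelta]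
    _ = (opInvSqrt A * opSqrt A) * (opSqrt A * opInvSqrt A) := by simp only [mul_assoc]
    _ = 1 := by rw [opInvSqrt_mul_opSqrt hA hAu, opSqrt_mul_opInvSqrt hA hAu, one_mul]

lemma opSqrt_opDelta {A : H →L[ℂ] H} (hA : 0 ≤ A) (hAu : IsUnit A) (B : H →L[ℂ] H) :
    opSqrt A * opDelta A B * opSqrt A = B := by
  calc opSqrt A * opDelta A B * opSqrt A
      = (opSqrt A * opInvSqrt A) * B * (opInvSqrt A * opSqrt A) := by
        simp only [opDelta, mul_assoc]
    _ = B := by rw [opInvSqrt_mul_opSqrt hA hAu, opSqrt_mul_opInvSqrt hA hAu, one_mul, mul_one]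

lemma spectrum_opDelta_subset {m M : ℝ} {A B : H →L[ℂ] H} (hA : 0 ≤ A) (hAu : IsUnit A)
    (hB : 0 ≤ B) (h1 : m • A ≤ B) (h2 : B ≤ M • A) :
    spectrum ℝ (opDelta A B) ⊆ Set.Icc m M := by
  have hsa : IsSelfAdjoint (opDelta A B) := isSelfAdjoint_opDelta hB
  have hs : ∀ r : ℝ, opInvSqrt A * (r • A) * opInvSqrt A = algebraMap ℝ (H →L[ℂ] H) r := by
    intro r
    rw [mul_smul_comm, smul_mul_assoc, Algebra.algebraMap_eq_smul_one]
    congr 1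
    exact opDelta_self hA hAu
  have h1' := (isSelfAdjoint_opInvSqrt A).conjugate_le_conjugate h1
  have h2' := (isSelfAdjoint_opInvSqrt A).conjugate_le_conjugate h2
  rw [hs] at h1' h2'
  exact fun x hx => ⟨(algebraMap_le_iff_le_spectrum (a := opDelta A B)).1 h1' x hx,
    (le_algebraMap_iff_spectrum_le (a := opDelta A B)).1 h2' x hx⟩

/-- A scalar inequality on `[m, M]` passes to the corresponding operator expressions. -/
lemma opSigma_mono {m M : ℝ} {A B : H →L[ℂ] H} (hA : 0 ≤ A) (hAu : IsUnit A)
    (hB : 0 ≤ B) (h1 : m • A ≤ B) (h2 : B ≤ M • A) {f g : ℝ → ℝ}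
    (hf : ContinuousOn f (Set.Icc m M)) (hg : ContinuousOn g (Set.Icc m M))
    (hfg : ∀ x ∈ Set.Icc m M, f x ≤ g x) : opSigma f A B ≤ opSigma g A B := by
  have hs := spectrum_opDelta_subset hA hAu hB h1 h2
  exact (isSelfAdjoint_opSqrt A).conjugate_le_conjugate
    (cfc_mono (fun x hx => hfg x (hs hx)) (hf.mono hs) (hg.mono hs))

lemma opSigma_const_mul {m M : ℝ} {A B : H →L[ℂ] H} (hA : 0 ≤ A) (hAu : IsUnit A)
    (hB : 0 ≤ B) (h1 : m • A ≤ B) (h2 : B ≤ M • A) {f : ℝ → ℝ}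
    (hf : ContinuousOn f (Set.Icc m M)) (r : ℝ) :
    opSigma (fun x => r * f x) A B = r • opSigma f A B := by
  have hs := spectrum_opDelta_subset hA hAu hB h1 h2
  rw [opSigma, cfc_const_mul r f _ (hf.mono hs), mul_smul_comm, smul_mul_assoc, opSigma]

lemma opSigma_affine {A B : H →L[ℂ] H} (hA : 0 ≤ A) (hAu : IsUnit A) (hB : 0 ≤ B) (a b : ℝ) :
    opSigma (fun x => a + b * x) A B = a • A + b • B := by
  have hsa : IsSelfAdjoint (opDelta A B) := isSelfAdjoint_opDelta hB
  have h : cfc (fun x : ℝ => a + b * x) (opDelta A B) = a • 1 + b • opDelta A B := by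
    rw [cfc_add (opDelta A B) (fun _ : ℝ => a) (fun x : ℝ => b * x), cfc_const a _, cfc_const_mul_id b _,
      Algebra.algebraMap_eq_smul_one]
  rw [opSigma, h, mul_add, add_mul, mul_smul_comm, mul_smul_comm, smul_mul_assoc, smul_mul_assoc,
    mul_one, opSqrt_mul_self hA hAu, opSqrt_opDelta hA hAu]

end Operator

theorem kantorovich_bounds_for_geometric_mean
    {H K : Type*} [NormedAddCommGroup H] [InnerProductSpace ℂ H] [CompleteSpace H]
    [NormedAddCommGroup K] [InnerProductSpace ℂ K] [CompleteSpace K]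
    (m M : ℝ) (hm : 0 < m) (hmM : m < M)
    (A B : H →L[ℂ] H) (hA : 0 ≤ A) (hAu : IsUnit A) (hB : 0 ≤ B) (hBu : IsUnit B)
    (hmAB : m • A ≤ B) (hBMA : B ≤ M • A)
    (φ : (H →L[ℂ] H) →ₗ[ℂ] (K →L[ℂ] K))
    (hφ_pos : ∀ X : H →L[ℂ] H, 0 ≤ X → 0 ≤ φ X)
    (hφA : 0 ≤ φ A) (hφAu : IsUnit (φ A))
    (t : ℝ) (ht : t < 0)
    (Kc : ℝ)
    (hKc : Kc = (m * M ^ t - M * m ^ t) / ((t - 1) * (M - m)) *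
      ((t - 1) / t * ((M ^ t - m ^ t) / (m * M ^ t - M * m ^ t))) ^ t) :
    Kc⁻¹ • φ (opGeom t A B) ≤
        Kc⁻¹ • φ (opSigma (fun x : ℝ => (M ^ (x - m) * m ^ (M - x)) ^ (t / (M - m))) A B) ∧
      Kc⁻¹ • φ (opSigma (fun x : ℝ => (M ^ (x - m) * m ^ (M - x)) ^ (t / (M - m))) A B) ≤
        opGeom t (φ A) (φ B) ∧
      opGeom t (φ A) (φ B) ≤
        opSigma (fun x : ℝ => (M ^ (x - m) * m ^ (M - x)) ^ (t / (M - m))) (φ A) (φ B) ∧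
      opSigma (fun x : ℝ => (M ^ (x - m) * m ^ (M - x)) ^ (t / (M - m))) (φ A) (φ B) ≤
        Kc • φ (opGeom t A B) := by
  have hM : 0 < M := hm.trans hmM
  have hK0 : 0 < Kc := hKc ▸ kantorovich_pos hm hmM ht
  have hφ_mono : ∀ X Y : H →L[ℂ] H, X ≤ Y → φ X ≤ φ Y := fun X Y hXY => by
    have := hφ_pos (Y - X) (sub_nonneg.2 hXY)
    rwa [map_sub, sub_nonneg] at this
  have hφ_smul : ∀ (r : ℝ) (X : H →L[ℂ] H), φ (r • X) = r • φ X := fun r X =>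
    φ.map_smul_of_tower r X
  have hφB : 0 ≤ φ B := hφ_pos B hB
  have h1 : m • φ A ≤ φ B := hφ_smul m A ▸ hφ_mono _ _ hmAB
  have h2 : φ B ≤ M • φ A := hφ_smul M A ▸ hφ_mono _ _ hBMA
  set g : ℝ → ℝ := fun x => (M ^ (x - m) * m ^ (M - x)) ^ (t / (M - m)) with hg
  set a : ℝ := (M * m ^ t - m * M ^ t) / (M - m) with ha
  set b : ℝ := (M ^ t - m ^ t) / (M - m) with hb
  have hgc : ContinuousOn g (Set.Icc m M) := (continuous_geomChord t hm hM).continuousOn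
  have hLc : ContinuousOn (fun x : ℝ => a + b * x) (Set.Icc m M) := by fun_prop
  have hpc : ContinuousOn (fun x : ℝ => x ^ t) (Set.Icc m M) := fun x hx =>
    (Real.continuousAt_rpow_const _ _ (Or.inl (hm.trans_le hx.1).ne')).continuousWithinAt
  have hfg : ∀ x ∈ Set.Icc m M, x ^ t ≤ g x := fun x hx => rpow_le_geomChord hm hmM ht hx
  have hgL : ∀ x ∈ Set.Icc m M, g x ≤ a + b * x := fun x hx => geomChord_le_chord hm hmM hx
  have hLK : ∀ x ∈ Set.Icc m M, a + b * x ≤ Kc * x ^ t := fun x hx =>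
    hKc ▸ chord_le_kantorovich hm hmM ht (hm.trans_le hx.1)
  -- the chord is affine, so its operator expression commutes with `φ`
  have hφL : φ (opSigma (fun x => a + b * x) A B) = opSigma (fun x => a + b * x) (φ A) (φ B) := by
    rw [opSigma_affine hA hAu hB, opSigma_affine hφA hφAu hφB, map_add, hφ_smul, hφ_smul]
  have hLA : opSigma (fun x => a + b * x) A B ≤ Kc • opGeom t A B := by
    rw [opGeom, ← opSigma_const_mul hA hAu hB hmAB hBMA hpc]
    exact opSigma_mono hA hAu hB hmAB hBMA hLc (hpc.const_mul Kc) hLK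
  have hLφ : opSigma (fun x => a + b * x) (φ A) (φ B) ≤ Kc • opGeom t (φ A) (φ B) := by
    rw [opGeom, ← opSigma_const_mul hφA hφAu hφB h1 h2 hpc]
    exact opSigma_mono hφA hφAu hφB h1 h2 hLc (hpc.const_mul Kc) hLK
  refine ⟨?_, ?_, ?_, ?_⟩
  · exact smul_le_smul_of_nonneg_left
      (hφ_mono _ _ (opSigma_mono hA hAu hB hmAB hBMA hpc hgc hfg)) (inv_nonneg.2 hK0.le)
  · have h := smul_le_smul_of_nonneg_left
      (((hφ_mono _ _ (opSigma_mono hA hAu hB hmAB hBMA hgc hLc hgL)).trans_eq hφL).trans hLφ)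
      (inv_nonneg.2 hK0.le)
    rwa [inv_smul_smul₀ hK0.ne'] at h
  · exact opSigma_mono hφA hφAu hφB h1 h2 hpc hgc hfg
  · rw [← hφ_smul]
    exact ((opSigma_mono hφA hφAu hφB h1 h2 hgc hLc hgL).trans_eq hφL.symm).trans
      (hφ_mono _ _ hLA)
end

section
/- Let 0 < m < M with M − m ≥ 1, let f : [m,M] → (0,∞) be continuous and log-convex with f(m) ≠ f(M), let A be a bounded self-adjoint operator on a complex Hilbert space H with mI ≤ A ≤ MI, and let φ : B(H) → B(K) be a normalized positive linear map. Define h(t) = (f(M)^{t-m} f(m)^{M-t})^{1/(M-m)} on [m,M], and for t₀ ∈ (m,M) set α = α(h,t₀) and β = β(h,t₀). Then f(φ(A)) ≤ (f(M)^{φ(A)-m} f(m)^{M-φ(A)})^{1/(M-m)} ≤ α · φ(f(M)^{(A-m)/(M-m)} f(m)^{(M-A)/(M-m)}) + β·I ≤ α · (φ(f(M)^{A-m} f(m)^{M-A}))^{1/(M-m)} + β·I. -/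
/-!
The function `h` is `t ↦ exp (p t + q)`, where `t ↦ p t + q` is the chord of `log f` on `[m, M]`;
`p ≠ 0` because `f m ≠ f M`.

* `f ≤ h` on `[m, M]` by log-convexity, and `φ A` has spectrum in `[m, M]`, so the first inequality
  is monotonicity of the functional calculus.
* With `a t + b` the chord of `h`, convexity gives `h (φ A) ≤ a φ(A) + b = φ (a A + b)`. The number
  `α` is positive, and `α h + β - (a t + b)` is `α` times the gap between `h` and its tangent line
  at `t₀`, so `a A + b ≤ α h(A) + β`. Applying `φ` gives the second inequality.
* Put `r = 1 / (M - m) ∈ (0, 1]`. Then `h(A) = X ^ r` for the positive operator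
  `X = f(M) ^ (A - m) f(m) ^ (M - A)`, and the last inequality is the Jensen inequality
  `φ (X ^ r) ≤ φ(X) ^ r` (`map_rpow_le`) multiplied by `α`.

The Jensen inequality is proved for unital positive maps between C⋆-algebras, without complete
positivity. The Bernstein basis is a positive partition of unity; summing
`(k/N - Z) φ(S b_{N,k}(T)) (k/N - Z) ≥ 0` over `k` and letting `N → ∞` gives a Kadison-type
inequality (`positive_map_variance_nonneg`). Taking `S = X`, `T = c X⁻¹`, `Z = c φ(X)⁻¹` yields
Choi's inequality `φ(X)⁻¹ ≤ φ(X⁻¹)` (`ringInverse_map_le`), and the integral representation of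
`x ^ r` as a superposition of `t ^ (r - 1) - t ^ r (t + x)⁻¹` concludes.
-/


/-- `a_g` for `g` on `[c,d]`. -/
noncomputable def chordSlope (c d : ℝ) (g : ℝ → ℝ) : ℝ := (g d - g c) / (d - c)

/-- `b_g` for `g` on `[c,d]`. -/
noncomputable def chordIntercept (c d : ℝ) (g : ℝ → ℝ) : ℝ := (d * g c - c * g d) / (d - c)

/-- `α(g,s) = a_g / g′(s)`. -/
noncomputable def mpAlpha (c d : ℝ) (g : ℝ → ℝ) (s : ℝ) : ℝ :=
  chordSlope c d g / deriv g s

/-- `β(g,s) = a_g·s + b_g − a_g·g(s)/g′(s)`. -/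
noncomputable def mpBeta (c d : ℝ) (g : ℝ → ℝ) (s : ℝ) : ℝ :=
  chordSlope c d g * s + chordIntercept c d g - chordSlope c d g * g s / deriv g s

/-! ### A Kadison-type inequality for positive maps -/

open Polynomial in
lemma bernsteinPolynomial_sum_sq_smul (n : ℕ) :
    ∑ k ∈ Finset.range (n + 1), (k * k) • bernsteinPolynomial ℝ n k =
      (n * (n - 1)) • X ^ 2 + n • X := by
  rw [← bernsteinPolynomial.sum_mul_smul, ← bernsteinPolynomial.sum_smul,
    ← Finset.sum_add_distrib]
  refine Finset.sum_congr rfl fun k _ => ?_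
  rw [← add_smul]
  congr 1
  cases k <;> simp; ring

section
variable {A B : Type*} [CStarAlgebra A] [PartialOrder A] [StarOrderedRing A]
  [CStarAlgebra B] [PartialOrder B] [StarOrderedRing B]

lemma map_real_smul' {V W : Type*} [AddCommGroup V] [Module ℂ V] [AddCommGroup W] [Module ℂ W]
    (φ : V →ₗ[ℂ] W) (r : ℝ) (x : V) : φ (r • x) = r • φ x := by
  rw [← Complex.coe_smul, map_smul, Complex.coe_smul]

open Polynomial in
lemma aeval_bernstein_nonneg {T : A} (hT₀ : 0 ≤ T) (hT₁ : T ≤ 1) (n k : ℕ) :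
    0 ≤ aeval T (bernsteinPolynomial ℝ n k) := by
  have h1 : 0 ≤ 1 - T := sub_nonneg.2 hT₁
  have hc : Commute (T ^ k) ((1 - T) ^ (n - k)) :=
    (((Commute.one_right T).sub_right (Commute.refl T)).pow_pow _ _)
  have : aeval T (bernsteinPolynomial ℝ n k) = n.choose k • (T ^ k * (1 - T) ^ (n - k)) := by
    simp [bernsteinPolynomial, mul_assoc]
  rw [this]
  exact nsmul_nonneg (Commute.mul_nonneg (CStarAlgebra.pow_nonneg hT₀ k) (CStarAlgebra.pow_nonneg h1 _) hc) _

open Polynomial in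
/-- The Kadison-type inequality up to an error of order `1 / (n + 1)`: with `N = n + 1`, it is
`N⁻² • ∑ k, (k - N Z) φ(S b_{N,k}(T)) (k - N Z) ≥ 0`, expanded by the formulas for the zeroth, first
and second moments of the Bernstein basis. -/
lemma positive_map_variance_nonneg_aux (φ : A →ₗ[ℂ] B) (hφ : ∀ X, 0 ≤ X → 0 ≤ φ X)
    {S T : A} (hS : 0 ≤ S) (hT₀ : 0 ≤ T) (hT₁ : T ≤ 1) (hST : Commute S T)
    {Z : B} (hZ : IsSelfAdjoint Z) (n : ℕ) :
    0 ≤ (φ (S * T ^ 2) - (Z * φ (S * T) + φ (S * T) * Z) + Z * φ S * Z) +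
      (1 / ((n : ℝ) + 1)) • φ (S * (T - T ^ 2)) := by
  set N := n + 1 with hN
  set b : ℕ → A := fun k => aeval T (bernsteinPolynomial ℝ N k) with hb
  have hM : ∀ k, 0 ≤ φ (S * b k) := fun k => by
    refine hφ _ (Commute.mul_nonneg hS (aeval_bernstein_nonneg hT₀ hT₁ _ _) ?_)
    have hb' : b k = N.choose k • (T ^ k * (1 - T) ^ (N - k)) := by
      simp [hb, bernsteinPolynomial, mul_assoc]
    rw [hb']
    exact ((hST.pow_right k).mul_right
      (((Commute.one_right S).sub_right hST).pow_right _)).smul_right _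
  have h0 : ∑ k ∈ Finset.range (N + 1), b k = 1 := by
    simpa using congrArg (aeval T) (bernsteinPolynomial.sum ℝ N)
  have h1 : ∑ k ∈ Finset.range (N + 1), (k : ℝ) • b k = (N : ℝ) • T := by
    simpa [Nat.cast_smul_eq_nsmul] using congrArg (aeval T) (bernsteinPolynomial.sum_smul ℝ N)
  have h2 : ∑ k ∈ Finset.range (N + 1), ((k : ℝ) * k) • b k
      = ((N : ℝ) * n) • T ^ 2 + (N : ℝ) • T := by
    have := congrArg (aeval T) (bernsteinPolynomial_sum_sq_smul N)
    simp only [map_sum, map_nsmul, map_add, aeval_X, map_pow] at this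
    simp only [← Nat.cast_mul, Nat.cast_smul_eq_nsmul]
    simpa [hN] using this
  have hr := map_real_smul' φ
  have e0 : ∑ k ∈ Finset.range (N + 1), φ (S * b k) = φ S := by
    rw [← map_sum, ← Finset.mul_sum, h0, mul_one]
  have e1 : ∑ k ∈ Finset.range (N + 1), (k : ℝ) • φ (S * b k) = (N : ℝ) • φ (S * T) := by
    simp_rw [← hr, ← mul_smul_comm]
    rw [← map_sum, ← Finset.mul_sum, h1]
  have e2 : ∑ k ∈ Finset.range (N + 1), ((k : ℝ) * k) • φ (S * b k)
      = ((N : ℝ) * n) • φ (S * T ^ 2) + (N : ℝ) • φ (S * T) := by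
    simp_rw [← hr, ← mul_smul_comm]
    rw [← map_sum, ← Finset.mul_sum, h2, mul_add, map_add]
  have key : 0 ≤ ∑ k ∈ Finset.range (N + 1),
      ((k : ℝ) • (1 : B) - (N : ℝ) • Z) * φ (S * b k) * ((k : ℝ) • (1 : B) - (N : ℝ) • Z) := by
    refine Finset.sum_nonneg fun k _ => ?_
    refine IsSelfAdjoint.conjugate_nonneg (hM k) ?_
    exact ((IsSelfAdjoint.all (k : ℝ)).smul (.one B)).sub ((IsSelfAdjoint.all (N : ℝ)).smul hZ)
  have exp : ∀ k : ℕ,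
      ((k : ℝ) • (1 : B) - (N : ℝ) • Z) * φ (S * b k) * ((k : ℝ) • (1 : B) - (N : ℝ) • Z)
      = ((k : ℝ) * k) • φ (S * b k) - (N : ℝ) • (Z * ((k : ℝ) • φ (S * b k))
        + ((k : ℝ) • φ (S * b k)) * Z) + ((N : ℝ) * N) • (Z * φ (S * b k) * Z) := fun k => by
    simp only [sub_mul, mul_sub, smul_mul_assoc, mul_smul_comm, one_mul, mul_one]
    module
  simp_rw [exp] at key
  rw [Finset.sum_add_distrib, Finset.sum_sub_distrib, ← Finset.smul_sum, Finset.sum_add_distrib,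
    ← Finset.mul_sum, ← Finset.sum_mul, ← Finset.smul_sum, ← Finset.sum_mul, ← Finset.mul_sum,
    e0, e1, e2] at key
  have hNpos : (0 : ℝ) < N := by positivity
  have hNn : (n : ℝ) = N - 1 := by simp [hN]
  have := smul_nonneg (show (0 : ℝ) ≤ 1 / (N * N) by positivity) key
  convert this using 1
  simp only [mul_sub, map_sub, smul_mul_assoc, mul_smul_comm]
  match_scalars <;> field_simp <;> simp [hNn, sub_eq_add_neg]

/-- A Kadison-type inequality: for commuting `S ≥ 0` and `0 ≤ T ≤ 1`, the expression
`φ (S (T - Z)²)`, expanded as if `φ` fixed the operator `Z` of the target algebra and placed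
symmetrically, is nonnegative. Only positivity of `φ` is used. -/
lemma positive_map_variance_nonneg (φ : A →ₗ[ℂ] B) (hφ : ∀ X, 0 ≤ X → 0 ≤ φ X)
    {S T : A} (hS : 0 ≤ S) (hT₀ : 0 ≤ T) (hT₁ : T ≤ 1) (hST : Commute S T)
    {Z : B} (hZ : IsSelfAdjoint Z) :
    0 ≤ φ (S * T ^ 2) - (Z * φ (S * T) + φ (S * T) * Z) + Z * φ S * Z := by
  have ht := (tendsto_one_div_add_atTop_nhds_zero_nat (𝕜 := ℝ)).smul_const (φ (S * (T - T ^ 2)))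
  have ht' := ht.const_add (φ (S * T ^ 2) - (Z * φ (S * T) + φ (S * T) * Z) + Z * φ S * Z)
  rw [zero_smul, add_zero] at ht'
  exact ge_of_tendsto' ht' fun n => positive_map_variance_nonneg_aux φ hφ hS hT₀ hT₁ hST hZ n

/-- Choi's inequality for the inverse: `φ(X)⁻¹ ≤ φ(X⁻¹)` for a unital positive map. -/
lemma ringInverse_map_le (φ : A →ₗ[ℂ] B) (hφ : ∀ X, 0 ≤ X → 0 ≤ φ X)
    {X : A} (hX : IsStrictlyPositive X) (hP : IsStrictlyPositive (φ X)) (hφ1 : φ 1 = 1) :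
    Ring.inverse (φ X) ≤ φ (Ring.inverse X) := by
  have hr := map_real_smul' φ
  set Y := Ring.inverse X with hY
  set Q := Ring.inverse (φ X) with hQ
  have hYpos : IsStrictlyPositive Y := by grind
  have hQpos : IsStrictlyPositive Q := by grind
  have hXY : X * Y = 1 := Ring.mul_inverse_cancel _ hX.isUnit
  have hYX : Y * X = 1 := Ring.inverse_mul_cancel _ hX.isUnit
  have hPQ : φ X * Q = 1 := Ring.mul_inverse_cancel _ hP.isUnit
  have hQP : Q * φ X = 1 := Ring.inverse_mul_cancel _ hP.isUnit
  -- `c` rescales `X⁻¹` so that `T = c X⁻¹` lies between `0` and `1`.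
  set c : ℝ := (‖Y‖ + 1)⁻¹ with hc
  have hcpos : 0 < c := by positivity
  have hT0 : 0 ≤ c • Y := smul_nonneg hcpos.le hYpos.nonneg
  have hT1 : c • Y ≤ 1 := by
    have h1 : Y ≤ (‖Y‖ + 1) • (1 : A) := by
      refine (IsSelfAdjoint.le_algebraMap_norm_self (.of_nonneg hYpos.nonneg)).trans ?_
      rw [Algebra.algebraMap_eq_smul_one]
      exact smul_le_smul_of_nonneg_right (by linarith) zero_le_one
    have h2 := smul_le_smul_of_nonneg_left h1 hcpos.le
    rwa [smul_smul, hc, inv_mul_cancel₀ (by positivity), one_smul] at h2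
  have hcomm : Commute X (c • Y) := by
    refine Commute.smul_right ?_ c
    rw [commute_iff_eq, hXY, hYX]
  have hZ : IsSelfAdjoint (c • Q) := (IsSelfAdjoint.all c).smul (.of_nonneg hQpos.nonneg)
  have key := positive_map_variance_nonneg φ hφ hX.nonneg hT0 hT1 hcomm hZ
  have e1 : X * (c • Y) ^ 2 = (c * c) • Y := by
    rw [sq, mul_smul_comm, smul_mul_assoc, smul_smul, mul_smul_comm, ← mul_assoc, hXY, one_mul]
  have e2 : X * (c • Y) = c • 1 := by rw [mul_smul_comm, hXY]
  rw [e1, e2, hr, hr, hφ1] at key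
  have e3 : (c * c) • φ Y - (c • Q * c • (1 : B) + c • (1 : B) * c • Q) + c • Q * φ X * c • Q
      = (c * c) • (φ Y - Q) := by
    simp only [smul_mul_assoc, mul_smul_comm, mul_one, one_mul, hQP]
    module
  rw [e3] at key
  have := smul_nonneg (show (0 : ℝ) ≤ (c * c)⁻¹ by positivity) key
  rw [smul_smul, inv_mul_cancel₀ (by positivity), one_smul] at this
  exact sub_nonneg.1 this

/-! ### Jensen's inequality for powers -/

open Real MeasureTheory CFC Set

lemma cfcₙ_rpowIntegrand₀₁_eq {p t : ℝ} (hp : p ∈ Ioo 0 1) (ht : 0 < t)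
    {x : A} (hx : 0 ≤ x) :
    cfcₙ (rpowIntegrand₀₁ p t) x =
      t ^ (p - 1) • (1 : A) - t ^ p • Ring.inverse (algebraMap ℝ A t + x) := by
  have hcont : ContinuousOn (rpowIntegrand₀₁ p t) (quasispectrum ℝ x) := by
    rw [rpowIntegrand₀₁_eq_sub (by grind) ht]
    have hs : ∀ r ∈ quasispectrum ℝ x, t + r ≠ 0 := fun r hr => by
      linarith [quasispectrum_nonneg_of_nonneg x hx r hr]
    exact continuousOn_const.sub (continuousOn_const.mul (ContinuousOn.inv₀ (by fun_prop) hs))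
  rw [cfcₙ_eq_cfc (hf := hcont) (hf0 := by simp [rpowIntegrand₀₁])]
  rw [rpowIntegrand₀₁_eq_sub (by grind) ht]
  have hs : ∀ r ∈ spectrum ℝ x, 0 ≤ r := fun r hr => spectrum_nonneg_of_nonneg hx hr
  have hspectrum : ∀ r ∈ spectrum ℝ x, t + r ≠ 0 := fun r hr => by linarith [hs r hr]
  have hg : ContinuousOn (fun z : ℝ => (t + z)⁻¹) (spectrum ℝ x) :=
    ContinuousOn.inv₀ (by fun_prop) hspectrum
  have hxs : IsSelfAdjoint x := .of_nonneg hx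
  have := cfc_sub (fun _ : ℝ => t ^ (p - 1)) (fun z : ℝ => t ^ p * (t + z)⁻¹) x (by fun_prop)
    (hg.const_smul (t ^ p))
  rw [this, cfc_const _ x, cfc_const_mul _ _ x hg, cfc_inv _ x hspectrum, cfc_const_add _ _ x,
      cfc_id' ℝ x, Algebra.algebraMap_eq_smul_one]

/-- The case `0 < p < 1` of `map_rpow_le`, by the integral representation of `x ^ p`. -/
lemma map_nnrpow_le {p : NNReal} (hp : p ∈ Ioo 0 1) (φ : A →ₗ[ℂ] B)
    (hφ : ∀ X, 0 ≤ X → 0 ≤ φ X) (hφ1 : φ 1 = 1) {X : A} (hX : 0 ≤ X) :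
    φ (X ^ p) ≤ (φ X) ^ p := by
  have hp' : (p : ℝ) ∈ Ioo (0 : ℝ) 1 := hp
  have hr := map_real_smul' φ
  -- Positive maps are bounded, so `φ` commutes with the integral.
  let ψ : A →ₚ[ℂ] B := { φ with
    monotone' := fun a b hab => by simpa using hφ (b - a) (sub_nonneg.2 hab) }
  let Φ : A →L[ℂ] B := ⟨φ, map_continuous ψ⟩
  have hΦ : ∀ x, Φ x = φ x := fun _ => rfl
  have hφX : 0 ≤ φ X := hφ X hX
  have hpair : (0 : A × B) ≤ (X, φ X) := Prod.le_def.2 ⟨hX, hφX⟩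
  -- The representing measure in Mathlib depends on the algebra. Working with the pair `(X, φ X)`
  -- in `A × B` produces one measure valid for both components.
  obtain ⟨μ, hμ⟩ := exists_measure_nnrpow_eq_integral_cfcₙ_rpowIntegrand₀₁ (A × B) hp
  obtain ⟨hint, heq⟩ := hμ (X, φ X) hpair
  have hpow : (X ^ p, φ X ^ p) = ∫ t in Ioi 0, cfcₙ (rpowIntegrand₀₁ p t) (X, φ X) ∂μ := by
    rw [← heq]
    exact (nnrpow_map_prod hX hφX).symm
  let L : A × B →L[ℝ] B := ContinuousLinearMap.snd ℝ A B -
    (Φ.restrictScalars ℝ).comp (ContinuousLinearMap.fst ℝ A B)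
  have hL : ∀ a b, L (a, b) = b - φ a := fun a b => rfl
  have hLint : φ X ^ p - φ (X ^ p) = ∫ t in Ioi 0, L (cfcₙ (rpowIntegrand₀₁ p t) (X, φ X)) ∂μ := by
    rw [ContinuousLinearMap.integral_comp_comm L hint, ← hpow, hL]
  rw [← sub_nonneg, hLint]
  refine integral_nonneg_of_ae ?_
  filter_upwards [ae_restrict_mem measurableSet_Ioi] with t ht
  have ht : 0 < t := ht
  have hc : ContinuousOn (rpowIntegrand₀₁ p t) (quasispectrum ℝ X ∪ quasispectrum ℝ (φ X)) := by
    rw [rpowIntegrand₀₁_eq_sub hp'.2.ne ht]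
    have hs : ∀ r ∈ quasispectrum ℝ X ∪ quasispectrum ℝ (φ X), t + r ≠ 0 := by
      rintro r (hr | hr)
      · linarith [quasispectrum_nonneg_of_nonneg X hX r hr]
      · linarith [quasispectrum_nonneg_of_nonneg _ hφX r hr]
    exact continuousOn_const.sub (continuousOn_const.mul (ContinuousOn.inv₀ (by fun_prop) hs))
  have hsplit : cfcₙ (rpowIntegrand₀₁ p t) (X, φ X) =
      (cfcₙ (rpowIntegrand₀₁ p t) X, cfcₙ (rpowIntegrand₀₁ p t) (φ X)) :=
    cfcₙ_map_prod (S := ℝ) _ X (φ X) hc (.of_nonneg hpair) (.of_nonneg hX) (.of_nonneg hφX)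
  have hmap : φ (algebraMap ℝ A t + X) = algebraMap ℝ B t + φ X := by
    rw [map_add, Algebra.algebraMap_eq_smul_one, hr, hφ1, Algebra.algebraMap_eq_smul_one]
  have hinv := ringInverse_map_le φ hφ (X := algebraMap ℝ A t + X) (by grind)
    (by rw [hmap]; grind) hφ1
  rw [hmap] at hinv
  rw [Pi.zero_apply, hsplit, hL, cfcₙ_rpowIntegrand₀₁_eq hp' ht hX,
    cfcₙ_rpowIntegrand₀₁_eq hp' ht hφX, map_sub, hr, hr, hφ1, sub_sub_sub_cancel_left, ← smul_sub]
  exact smul_nonneg (by positivity) (sub_nonneg.2 hinv)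

/-- Jensen's inequality `φ(X ^ p) ≤ φ(X) ^ p`, `0 < p ≤ 1`, for a unital positive map. -/
lemma map_rpow_le {p : ℝ} (hp : p ∈ Ioc 0 1) (φ : A →ₗ[ℂ] B)
    (hφ : ∀ X, 0 ≤ X → 0 ≤ φ X) (hφ1 : φ 1 = 1) {X : A} (hX : 0 ≤ X) :
    φ (X ^ p) ≤ (φ X) ^ p := by
  rcases eq_or_lt_of_le hp.2 with rfl | h1
  · rw [rpow_one X hX, rpow_one _ (hφ X hX)]
  · lift p to NNReal using hp.1.le
    have hp0 : 0 < p := by exact_mod_cast hp.1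
    rw [← nnrpow_eq_rpow hp0, ← nnrpow_eq_rpow hp0]
    exact map_nnrpow_le ⟨hp0, by exact_mod_cast h1⟩ φ hφ hφ1 hX

/-! ### Exponentials of affine functions -/

lemma spectrum_subset_Icc_of_le {m M : ℝ} {X : A} (hX : IsSelfAdjoint X)
    (h₁ : m • (1 : A) ≤ X) (h₂ : X ≤ M • (1 : A)) : spectrum ℝ X ⊆ Icc m M := by
  rw [← Algebra.algebraMap_eq_smul_one] at h₁ h₂
  exact fun t ht => ⟨(algebraMap_le_iff_le_spectrum hX).1 h₁ t ht,
    (le_algebraMap_iff_spectrum_le hX).1 h₂ t ht⟩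

lemma cfc_linear_exp_le_chord {a b p q : ℝ} {m M : ℝ} {X : A} (hX : IsSelfAdjoint X)
    (hs : spectrum ℝ X ⊆ Icc m M)
    (h : ∀ t ∈ Icc m M, exp (p * t + q) ≤ a * t + b) :
    cfc (fun t => exp (p * t + q)) X ≤ a • X + b • 1 := by
  have e : a • X + b • (1 : A) = cfc (fun t => a * t + b) X := by
    rw [cfc_add_const b _ X, cfc_const_mul a _ X, cfc_id' ℝ X, Algebra.algebraMap_eq_smul_one]
  rw [e]
  exact cfc_mono (fun t ht => h t (hs ht)) (by fun_prop) (by fun_prop)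

lemma linear_le_cfc_linear_exp {a b p q α β : ℝ} {X : A} (hX : IsSelfAdjoint X)
    (h : ∀ t, a * t + b ≤ α * exp (p * t + q) + β) :
    a • X + b • 1 ≤ α • cfc (fun t => exp (p * t + q)) X + β • 1 := by
  have e : a • X + b • (1 : A) = cfc (fun t => a * t + b) X := by
    rw [cfc_add_const b _ X, cfc_const_mul a _ X, cfc_id' ℝ X, Algebra.algebraMap_eq_smul_one]
  have e' : α • cfc (fun t => exp (p * t + q)) X + β • (1 : A)
      = cfc (fun t => α * exp (p * t + q) + β) X := by
    rw [cfc_add_const β _ X, cfc_const_mul α _ X, Algebra.algebraMap_eq_smul_one]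
  rw [e, e']
  exact cfc_mono (fun t _ => h t) (by fun_prop) (by fun_prop)
end

section scalar
open Real Set

lemma exp_affine_le_chord {p q m M : ℝ} (hmM : m < M) {t : ℝ} (ht : t ∈ Icc m M) :
    exp (p * t + q) ≤ chordSlope m M (fun t => exp (p * t + q)) * t +
      chordIntercept m M (fun t => exp (p * t + q)) := by
  have hd : 0 < M - m := sub_pos.2 hmM
  have hc := convexOn_exp.2 (mem_univ (p * m + q)) (mem_univ (p * M + q))
    (div_nonneg (sub_nonneg.2 ht.2) hd.le) (div_nonneg (sub_nonneg.2 ht.1) hd.le)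
    (by field_simp; ring)
  simp only [smul_eq_mul] at hc
  have e1 : (M - t) / (M - m) * (p * m + q) + (t - m) / (M - m) * (p * M + q) = p * t + q := by
    field_simp; ring
  rw [e1] at hc
  refine hc.trans_eq ?_
  simp only [chordSlope, chordIntercept]
  field_simp
  ring

lemma deriv_exp_affine (p q s : ℝ) :
    deriv (fun t => exp (p * t + q)) s = exp (p * s + q) * p := by
  have := (((hasDerivAt_id s).const_mul p).add_const q).exp
  simpa using this.deriv

lemma mpAlpha_exp_affine_pos {p q m M : ℝ} (hmM : m < M) (hp : p ≠ 0) (s : ℝ) :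
    0 < mpAlpha m M (fun t => exp (p * t + q)) s := by
  have hd : 0 < M - m := sub_pos.2 hmM
  rw [mpAlpha, deriv_exp_affine, chordSlope]
  rcases lt_or_gt_of_ne hp with hp | hp
  · refine div_pos_of_neg_of_neg (div_neg_of_neg_of_pos (sub_neg.2 (exp_lt_exp.2 ?_)) hd)
      (mul_neg_of_pos_of_neg (exp_pos _) hp)
    nlinarith
  · refine div_pos (div_pos (sub_pos.2 (exp_lt_exp.2 ?_)) hd) (mul_pos (exp_pos _) hp)
    nlinarith

/-- `α g + β - (a t + b)` is `α` times the gap between `g` and its tangent line at `s`, for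
`g t = exp (p t + q)` with chord `a t + b`. -/
lemma chord_le_mpAlpha_mul_exp_affine {p q m M : ℝ} (hmM : m < M) (hp : p ≠ 0) (s t : ℝ) :
    chordSlope m M (fun t => exp (p * t + q)) * t + chordIntercept m M (fun t => exp (p * t + q)) ≤
      mpAlpha m M (fun t => exp (p * t + q)) s * exp (p * t + q) +
        mpBeta m M (fun t => exp (p * t + q)) s := by
  have hα := mpAlpha_exp_affine_pos (q := q) hmM hp s
  have htan : exp (p * s + q) * (p * (t - s) + 1) ≤ exp (p * t + q) := by
    have e : exp (p * t + q) = exp (p * s + q) * exp (p * (t - s)) := by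
      rw [← exp_add]; ring_nf
    rw [e]
    exact mul_le_mul_of_nonneg_left (add_one_le_exp _) (exp_pos _).le
  have h1 := mul_le_mul_of_nonneg_left htan hα.le
  have hβ : mpBeta m M (fun t => exp (p * t + q)) s =
      chordSlope m M (fun t => exp (p * t + q)) * s + chordIntercept m M (fun t => exp (p * t + q))
        - mpAlpha m M (fun t => exp (p * t + q)) s * exp (p * s + q) := by
    rw [mpBeta, mpAlpha]; ring
  have hα' : mpAlpha m M (fun t => exp (p * t + q)) s * (exp (p * s + q) * p) =
      chordSlope m M (fun t => exp (p * t + q)) := by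
    rw [mpAlpha, deriv_exp_affine]
    exact div_mul_cancel₀ _ (mul_ne_zero (exp_pos _).ne' hp)
  rw [hβ]
  linear_combination h1 - (t - s) * hα'

/-- A log-convex function lies below the exponential of the chord of its logarithm. -/
lemma le_exp_chord_of_logconvex {m M : ℝ} (hmM : m < M) {f : ℝ → ℝ}
    (hf_pos : ∀ t ∈ Icc m M, 0 < f t)
    (hf_logconv : ConvexOn ℝ (Icc m M) (fun t => log (f t))) {t : ℝ} (ht : t ∈ Icc m M) :
    f t ≤ exp ((log (f M) - log (f m)) / (M - m) * t +
      (M * log (f m) - m * log (f M)) / (M - m)) := by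
  have hd : 0 < M - m := sub_pos.2 hmM
  have hc := hf_logconv.2 (left_mem_Icc.2 hmM.le) (right_mem_Icc.2 hmM.le)
    (div_nonneg (sub_nonneg.2 ht.2) hd.le) (div_nonneg (sub_nonneg.2 ht.1) hd.le)
    (by field_simp; ring)
  simp only [smul_eq_mul] at hc
  have e1 : (M - t) / (M - m) * m + (t - m) / (M - m) * M = t := by
    field_simp; ring
  rw [e1] at hc
  rw [← log_le_iff_le_exp (hf_pos t ht)]
  refine hc.trans_eq ?_
  field_simp
  ring
end scalar

theorem exp_chord_reverse_chain_large_interval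
    {H K : Type*} [NormedAddCommGroup H] [InnerProductSpace ℂ H] [CompleteSpace H]
    [NormedAddCommGroup K] [InnerProductSpace ℂ K] [CompleteSpace K]
    (m M : ℝ) (hm : 0 < m) (hmM : m < M)
    (f : ℝ → ℝ) (hf_cont : ContinuousOn f (Set.Icc m M))
    (hf_pos : ∀ t ∈ Set.Icc m M, 0 < f t)
    (hf_logconv : ConvexOn ℝ (Set.Icc m M) (fun t => Real.log (f t)))
    (A : H →L[ℂ] H) (hA : IsSelfAdjoint A)
    (hA₁ : m • (1 : H →L[ℂ] H) ≤ A) (hA₂ : A ≤ M • (1 : H →L[ℂ] H))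
    (φ : (H →L[ℂ] H) →ₗ[ℂ] (K →L[ℂ] K))
    (hφ_pos : ∀ X : H →L[ℂ] H, 0 ≤ X → 0 ≤ φ X)
    (hφ_one : φ 1 = 1)
    (h : ℝ → ℝ)
    (hh : ∀ t, h t = (f M ^ (t - m) * f m ^ (M - t)) ^ (1 / (M - m)))
    (t₀ : ℝ) (ht₀ : t₀ ∈ Set.Ioo m M)
    (hMm : 1 ≤ M - m) (hfmM : f m ≠ f M) :
    cfc f (φ A) ≤ cfc h (φ A) ∧
      cfc h (φ A) ≤
        mpAlpha m M h t₀ •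
            φ (cfc (fun t : ℝ => f M ^ ((t - m) / (M - m)) * f m ^ ((M - t) / (M - m))) A) +
          mpBeta m M h t₀ • 1 ∧
      mpAlpha m M h t₀ •
            φ (cfc (fun t : ℝ => f M ^ ((t - m) / (M - m)) * f m ^ ((M - t) / (M - m))) A) +
          mpBeta m M h t₀ • 1 ≤
        mpAlpha m M h t₀ •
            cfc (fun s : ℝ => s ^ (1 / (M - m)))
              (φ (cfc (fun t : ℝ => f M ^ (t - m) * f m ^ (M - t)) A)) +
          mpBeta m M h t₀ • 1 := by
  have hd : 0 < M - m := sub_pos.2 hmM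
  have hfm : 0 < f m := hf_pos m (Set.left_mem_Icc.2 hmM.le)
  have hfM : 0 < f M := hf_pos M (Set.right_mem_Icc.2 hmM.le)
  have hr := map_real_smul' φ
  have hmono : ∀ X Y : H →L[ℂ] H, X ≤ Y → φ X ≤ φ Y := fun X Y hXY => by
    simpa using hφ_pos (Y - X) (sub_nonneg.2 hXY)
  set p : ℝ := (Real.log (f M) - Real.log (f m)) / (M - m) with hp
  set q : ℝ := (M * Real.log (f m) - m * Real.log (f M)) / (M - m) with hq
  have hp0 : p ≠ 0 := by
    refine div_ne_zero (sub_ne_zero.2 fun h => hfmM ?_) hd.ne'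
    exact (Real.log_injOn_pos hfM hfm h).symm
  have hB : (fun t : ℝ => f M ^ (t - m) * f m ^ (M - t)) =
      fun t => Real.exp ((M - m) * (p * t + q)) := by
    funext t
    rw [Real.rpow_def_of_pos hfM, Real.rpow_def_of_pos hfm, ← Real.exp_add, hp, hq]
    congr 1
    field_simp
    ring
  have hE : (fun t : ℝ => f M ^ ((t - m) / (M - m)) * f m ^ ((M - t) / (M - m))) =
      fun t => Real.exp (p * t + q) := by
    funext t
    rw [Real.rpow_def_of_pos hfM, Real.rpow_def_of_pos hfm, ← Real.exp_add, hp, hq]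
    congr 1
    field_simp
    ring
  have hroot : ∀ t : ℝ, Real.exp ((M - m) * (p * t + q)) ^ (1 / (M - m)) =
      Real.exp (p * t + q) := fun t => by
    rw [← Real.exp_mul]
    congr 1
    field_simp
  have hh' : h = fun t => Real.exp (p * t + q) := by
    funext t
    rw [hh, congrFun hB t, hroot]
  have hP₁ : m • (1 : K →L[ℂ] K) ≤ φ A := by simpa [hr, hφ_one] using hmono _ _ hA₁
  have hP₂ : φ A ≤ M • (1 : K →L[ℂ] K) := by simpa [hr, hφ_one] using hmono _ _ hA₂
  have hP : IsSelfAdjoint (φ A) := by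
    have h1 : IsSelfAdjoint (φ A - m • (1 : K →L[ℂ] K)) := .of_nonneg (sub_nonneg.2 hP₁)
    simpa using h1.add ((IsSelfAdjoint.all m).smul (.one (K →L[ℂ] K)))
  have hsP := spectrum_subset_Icc_of_le hP hP₁ hP₂
  rw [hB, hE, hh']
  have hα := mpAlpha_exp_affine_pos (q := q) hmM hp0 t₀
  refine ⟨?_, ?_, ?_⟩
  · exact cfc_mono (fun t ht => le_exp_chord_of_logconvex hmM hf_pos hf_logconv (hsP ht))
      (hf_cont.mono hsP) (by fun_prop)
  · refine (cfc_linear_exp_le_chord hP hsP fun t ht => exp_affine_le_chord hmM ht).trans ?_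
    have := hmono _ _ (linear_le_cfc_linear_exp hA
      (chord_le_mpAlpha_mul_exp_affine (q := q) hmM hp0 t₀))
    simpa only [map_add, hr, hφ_one] using this
  · refine add_le_add_left (smul_le_smul_of_nonneg_left ?_ hα.le) _
    have hr1 : 1 / (M - m) ∈ Set.Ioc (0 : ℝ) 1 :=
      ⟨by positivity, by rw [div_le_one hd]; exact hMm⟩
    have hX : 0 ≤ cfc (fun t => Real.exp ((M - m) * (p * t + q))) A :=
      cfc_nonneg fun t _ => (Real.exp_pos _).le
    have key := map_rpow_le hr1 φ hφ_pos hφ_one hX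
    rw [CFC.rpow_eq_cfc_real hX, CFC.rpow_eq_cfc_real (hφ_pos _ hX)] at key
    rw [← cfc_comp' (fun s : ℝ => s ^ (1 / (M - m))) _ A
      ((Real.continuous_rpow_const hr1.1.le).continuousOn) (by fun_prop)] at key
    simpa only [hroot] using key
end

section
/- Let 0 < m < M with M − m < 1, let f : [m,M] → (0,∞) be continuous and log-convex with f(m) < f(M), let A be a bounded self-adjoint operator on a complex Hilbert space H with mI ≤ A ≤ MI, and let φ : B(H) → B(K) be a normalized positive linear map. Define h(t) = (f(M)^{t-m} f(m)^{M-t})^{1/(M-m)} on [m,M] and h₁(t) = t^{1/(M-m)} on [f(m)^{M-m}, f(M)^{M-m}]. For t₀ ∈ (m,M) set α = α(h,t₀), β = β(h,t₀), and for t₁ ∈ (f(m)^{M-m}, f(M)^{M-m}) set α₁ = α(h₁,t₁) (computed on the interval [f(m)^{M-m}, f(M)^{M-m}]) and β₁ = β(h₁,t₁). Then f(φ(A)) ≤ (f(M)^{φ(A)-m} f(m)^{M-φ(A)})^{1/(M-m)} ≤ α · φ(f(M)^{(A-m)/(M-m)} f(m)^{(M-A)/(M-m)}) + β·I ≤ α·α₁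 · (φ(f(M)^{A-m} f(m)^{M-A}))^{1/(M-m)} + (α·β₁ + β)·I. -/
/-- Mond–Pečarić sandwich: a convex function lies below its chord, and the chord lies below
`mpAlpha * g + mpBeta`, since it equals that expression with `g` replaced by its tangent at `s`. -/
lemma chord_sandwich {c d s : ℝ} {g : ℝ → ℝ} (hg : ConvexOn ℝ (Set.Icc c d) g)
    (hs : s ∈ Set.Ioo c d) (hd : DifferentiableAt ℝ g s) (hpos : 0 < deriv g s)
    (hcd : g c ≤ g d) :
    0 ≤ mpAlpha c d g s ∧ ∀ x ∈ Set.Icc c d,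
      g x ≤ chordSlope c d g * x + chordIntercept c d g ∧
      chordSlope c d g * x + chordIntercept c d g ≤ mpAlpha c d g s * g x + mpBeta c d g s := by
  obtain ⟨hs1, hs2⟩ := hs
  have hlt : 0 < d - c := by linarith
  have hα : 0 ≤ mpAlpha c d g s :=
    div_nonneg (div_nonneg (by linarith) hlt.le) hpos.le
  refine ⟨hα, fun x hx => ⟨?_, ?_⟩⟩
  · have key := hg.2
    replace key := key (Set.left_mem_Icc.2 (by linarith)) (Set.right_mem_Icc.2 (by linarith))
      (a := (d - x) / (d - c)) (b := (x - c) / (d - c))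
      (div_nonneg (by linarith [hx.2]) hlt.le) (div_nonneg (by linarith [hx.1]) hlt.le)
      (by field_simp; ring)
    simp only [smul_eq_mul] at key
    have e1 : (d - x) / (d - c) * c + (x - c) / (d - c) * d = x := by field_simp; ring
    rw [e1] at key
    refine key.trans_eq ?_
    unfold chordSlope chordIntercept
    field_simp
    ring
  · have tangent : g s + deriv g s * (x - s) ≤ g x := by
      rcases lt_trichotomy x s with hlt | rfl | hlt
      · have := hg.slope_le_deriv hx ⟨hs1.le, hs2.le⟩ hlt hd
        rw [slope_def_field, div_le_iff₀ (by linarith)] at this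
        linarith
      · simp
      · have := hg.deriv_le_slope ⟨hs1.le, hs2.le⟩ hx hlt hd
        rw [slope_def_field, le_div_iff₀ (by linarith)] at this
        linarith
    have := mul_le_mul_of_nonneg_left tangent hα
    have e : mpAlpha c d g s * (g s + deriv g s * (x - s)) + mpBeta c d g s =
        chordSlope c d g * x + chordIntercept c d g := by
      unfold mpAlpha mpBeta
      field_simp
      ring
    linarith

section Operators

variable {E : Type*} [NormedAddCommGroup E] [InnerProductSpace ℂ E] [CompleteSpace E]

lemma isSelfAdjoint_of_smul_one_le {X : E →L[ℂ] E} {c : ℝ} (h : c • (1 : E →L[ℂ] E) ≤ X) :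
    IsSelfAdjoint X := by
  have h1 : IsSelfAdjoint (X - c • (1 : E →L[ℂ] E)) := IsSelfAdjoint.of_nonneg (sub_nonneg.2 h)
  have h2 : IsSelfAdjoint (c • (1 : E →L[ℂ] E)) := by
    rw [← Algebra.algebraMap_eq_smul_one]
    exact IsSelfAdjoint.algebraMap _ (.all c)
  have h3 := h1.add h2
  rwa [sub_add_cancel] at h3

lemma spectrum_mem_Icc {X : E →L[ℂ] E} {c d : ℝ} (h1 : c • (1 : E →L[ℂ] E) ≤ X)
    (h2 : X ≤ d • (1 : E →L[ℂ] E)) : ∀ x ∈ spectrum ℝ X, x ∈ Set.Icc c d := by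
  have hX := isSelfAdjoint_of_smul_one_le h1
  rw [← Algebra.algebraMap_eq_smul_one] at h1 h2
  exact fun x hx => ⟨(algebraMap_le_iff_le_spectrum hX).1 h1 x hx,
    (le_algebraMap_iff_spectrum_le hX).1 h2 x hx⟩

lemma smul_cfc_add {X : E →L[ℂ] E} (hX : IsSelfAdjoint X) {u : ℝ → ℝ}
    (hu : ContinuousOn u (spectrum ℝ X)) (a b : ℝ) :
    a • cfc u X + b • (1 : E →L[ℂ] E) = cfc (fun t => a * u t + b) X := by
  rw [cfc_add_const b (fun t => a * u t) X (continuousOn_const.mul hu) hX,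
    cfc_const_mul a u X hu, Algebra.algebraMap_eq_smul_one]

/-- Scalar inequalities between affine expressions in two functions pass to operators. -/
lemma affine_cfc_le {X : E →L[ℂ] E} {c d : ℝ} (h1 : c • (1 : E →L[ℂ] E) ≤ X)
    (h2 : X ≤ d • (1 : E →L[ℂ] E)) {u v : ℝ → ℝ} (hu : ContinuousOn u (Set.Icc c d))
    (hv : ContinuousOn v (Set.Icc c d)) {a b a' b' : ℝ}
    (huv : ∀ x ∈ Set.Icc c d, a * u x + b ≤ a' * v x + b') :
    a • cfc u X + b • (1 : E →L[ℂ] E) ≤ a' • cfc v X + b' • (1 : E →L[ℂ] E) := by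
  have hX := isSelfAdjoint_of_smul_one_le h1
  have hsp := spectrum_mem_Icc h1 h2
  have hu' := hu.mono hsp
  have hv' := hv.mono hsp
  rw [smul_cfc_add hX hu', smul_cfc_add hX hv']
  exact cfc_mono (fun x hx => huv x (hsp x hx)) ((continuousOn_const.mul hu').add continuousOn_const)
    ((continuousOn_const.mul hv').add continuousOn_const)

end Operators

theorem exp_chord_reverse_chain_small_interval
    {H K : Type*} [NormedAddCommGroup H] [InnerProductSpace ℂ H] [CompleteSpace H]
    [NormedAddCommGroup K] [InnerProductSpace ℂ K] [CompleteSpace K]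
    (m M : ℝ) (hm : 0 < m) (hmM : m < M)
    (f : ℝ → ℝ) (hf_cont : ContinuousOn f (Set.Icc m M))
    (hf_pos : ∀ t ∈ Set.Icc m M, 0 < f t)
    (hf_logconv : ConvexOn ℝ (Set.Icc m M) (fun t => Real.log (f t)))
    (A : H →L[ℂ] H) (hA : IsSelfAdjoint A)
    (hA₁ : m • (1 : H →L[ℂ] H) ≤ A) (hA₂ : A ≤ M • (1 : H →L[ℂ] H))
    (φ : (H →L[ℂ] H) →ₗ[ℂ] (K →L[ℂ] K))
    (hφ_pos : ∀ X : H →L[ℂ] H, 0 ≤ X → 0 ≤ φ X)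
    (hφ_one : φ 1 = 1)
    (h : ℝ → ℝ)
    (hh : ∀ t, h t = (f M ^ (t - m) * f m ^ (M - t)) ^ (1 / (M - m)))
    (t₀ : ℝ) (ht₀ : t₀ ∈ Set.Ioo m M)
    (hMm : M - m < 1) (hfmM : f m < f M)
    (h₁ : ℝ → ℝ) (hh₁ : ∀ t, h₁ t = t ^ (1 / (M - m)))
    (t₁ : ℝ) (ht₁ : t₁ ∈ Set.Ioo (f m ^ (M - m)) (f M ^ (M - m))) :
    cfc f (φ A) ≤ cfc h (φ A) ∧
      cfc h (φ A) ≤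
        mpAlpha m M h t₀ •
            φ (cfc (fun t : ℝ => f M ^ ((t - m) / (M - m)) * f m ^ ((M - t) / (M - m))) A) +
          mpBeta m M h t₀ • 1 ∧
      mpAlpha m M h t₀ •
            φ (cfc (fun t : ℝ => f M ^ ((t - m) / (M - m)) * f m ^ ((M - t) / (M - m))) A) +
          mpBeta m M h t₀ • 1 ≤
        (mpAlpha m M h t₀ * mpAlpha (f m ^ (M - m)) (f M ^ (M - m)) h₁ t₁) •
            cfc (fun s : ℝ => s ^ (1 / (M - m)))
              (φ (cfc (fun t : ℝ => f M ^ (t - m) * f m ^ (M - t)) A)) +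
          (mpAlpha m M h t₀ * mpBeta (f m ^ (M - m)) (f M ^ (M - m)) h₁ t₁ +
            mpBeta m M h t₀) • 1 := by
  have hL : 0 < M - m := by linarith
  have hmI : m ∈ Set.Icc m M := ⟨le_rfl, hmM.le⟩
  have hMI : M ∈ Set.Icc m M := ⟨hmM.le, le_rfl⟩
  have fm := hf_pos m hmI
  have fM := hf_pos M hMI
  have hφ_mono : ∀ X Y : H →L[ℂ] H, X ≤ Y → φ X ≤ φ Y := fun X Y hXY => by
    have := hφ_pos (Y - X) (sub_nonneg.2 hXY)
    rwa [map_sub, sub_nonneg] at this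
  have hφ_smul : ∀ (r : ℝ) (X : H →L[ℂ] H), φ (r • X) = r • φ X := fun r X =>
    φ.map_smul_of_tower r X
  have hφ_aff : ∀ (a b : ℝ) (X : H →L[ℂ] H), φ (a • X + b • 1) = a • φ X + b • 1 :=
    fun a b X => by rw [map_add, hφ_smul, hφ_smul, hφ_one]
  have hφ_lower : ∀ (X : H →L[ℂ] H) (c : ℝ), c • (1 : H →L[ℂ] H) ≤ X →
      c • (1 : K →L[ℂ] K) ≤ φ X := fun X c hX => by
    simpa [hφ_smul, hφ_one] using hφ_mono _ _ hX
  have hφ_upper : ∀ (X : H →L[ℂ] H) (c : ℝ), X ≤ c • (1 : H →L[ℂ] H) →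
      φ X ≤ c • (1 : K →L[ℂ] K) := fun X c hX => by
    simpa [hφ_smul, hφ_one] using hφ_mono _ _ hX
  -- The inner function of `h` and its range.
  set g : ℝ → ℝ := fun t => f M ^ (t - m) * f m ^ (M - t) with hg
  have hg_pos : ∀ t, 0 < g t := fun t => mul_pos (Real.rpow_pos_of_pos fM _) (Real.rpow_pos_of_pos fm _)
  have hg_cont : Continuous g :=
    (Continuous.rpow continuous_const (by fun_prop) (fun _ => Or.inl fM.ne')).mul
      (Continuous.rpow continuous_const (by fun_prop) (fun _ => Or.inl fm.ne'))
  have hg_mem : ∀ t ∈ Set.Icc m M, g t ∈ Set.Icc (f m ^ (M - m)) (f M ^ (M - m)) := by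
    intro t ht
    have e : ∀ z : ℝ, 0 < z → z ^ (M - m) = z ^ (t - m) * z ^ (M - t) := fun z hz => by
      rw [← Real.rpow_add hz]; congr 1; ring
    rw [e _ fm, e _ fM]
    constructor
    · exact mul_le_mul_of_nonneg_right
        (Real.rpow_le_rpow fm.le hfmM.le (by linarith [ht.1])) (Real.rpow_nonneg fm.le _)
    · exact mul_le_mul_of_nonneg_left
        (Real.rpow_le_rpow fm.le hfmM.le (by linarith [ht.2])) (Real.rpow_nonneg fM.le _)
  -- `h` is the exponential of an affine function of slope `l`.
  set l : ℝ := (Real.log (f M) - Real.log (f m)) / (M - m) with hl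
  set k : ℝ := (M * Real.log (f m) - m * Real.log (f M)) / (M - m) with hk
  have hl_pos : 0 < l := div_pos (by linarith [Real.log_lt_log fm hfmM]) hL
  have h_exp : h = fun t => Real.exp (l * t + k) := by
    funext t
    rw [hh, Real.rpow_def_of_pos (hg_pos t), Real.log_mul (Real.rpow_pos_of_pos fM _).ne'
      (Real.rpow_pos_of_pos fm _).ne', Real.log_rpow fM, Real.log_rpow fm]
    congr 1
    rw [hl, hk]
    field_simp
    ring
  have h_split : (fun t : ℝ => f M ^ ((t - m) / (M - m)) * f m ^ ((M - t) / (M - m))) = h := by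
    funext t
    rw [hh, Real.mul_rpow (Real.rpow_nonneg fM.le _) (Real.rpow_nonneg fm.le _),
      ← Real.rpow_mul fM.le, ← Real.rpow_mul fm.le, mul_one_div, mul_one_div]
  have h_cont : Continuous h := by rw [h_exp]; fun_prop
  have h_conv : ConvexOn ℝ (Set.Icc m M) h := by
    refine ⟨convex_Icc m M, fun x _ y _ a b ha hb hab => ?_⟩
    have := convexOn_exp.2 (Set.mem_univ (l * x + k)) (Set.mem_univ (l * y + k)) ha hb hab
    simp only [smul_eq_mul, h_exp] at this ⊢
    convert this using 2
    linear_combination (-k) * hab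
  have h_deriv : ∀ t, HasDerivAt h (Real.exp (l * t + k) * l) t := fun t => by
    rw [h_exp]
    simpa using (((hasDerivAt_id t).const_mul l).add_const k).exp
  have h_mono : h m ≤ h M := by
    simp only [h_exp]
    exact Real.exp_le_exp.2 (by nlinarith)
  obtain ⟨hα, h_sand⟩ := chord_sandwich h_conv ht₀ (h_deriv t₀).differentiableAt
    (by rw [(h_deriv t₀).deriv]; positivity) h_mono
  -- The power function `h₁` on the range of `g`.
  have hc_pos : 0 < f m ^ (M - m) := Real.rpow_pos_of_pos fm _
  have hp : 1 ≤ 1 / (M - m) := (one_le_div hL).2 hMm.le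
  have hh₁' : h₁ = fun s : ℝ => s ^ (1 / (M - m)) := funext hh₁
  have h₁_cont : Continuous h₁ := by
    rw [hh₁']
    exact Real.continuous_rpow_const (by linarith)
  have h₁_conv : ConvexOn ℝ (Set.Icc (f m ^ (M - m)) (f M ^ (M - m))) h₁ := by
    rw [hh₁']
    exact (convexOn_rpow hp).subset (fun x hx => hc_pos.le.trans hx.1) (convex_Icc _ _)
  have ht₁_pos : 0 < t₁ := hc_pos.trans ht₁.1
  have h₁_deriv : HasDerivAt h₁ (1 / (M - m) * t₁ ^ (1 / (M - m) - 1)) t₁ := by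
    rw [hh₁']
    exact Real.hasDerivAt_rpow_const (Or.inl ht₁_pos.ne')
  have h₁_mono : h₁ (f m ^ (M - m)) ≤ h₁ (f M ^ (M - m)) := by
    rw [hh₁, hh₁]
    exact Real.rpow_le_rpow hc_pos.le (ht₁.1.trans ht₁.2).le (by linarith)
  obtain ⟨-, h₁_sand⟩ := chord_sandwich h₁_conv ht₁ h₁_deriv.differentiableAt
    (by rw [h₁_deriv.deriv]; positivity) h₁_mono
  have hφA₁ := hφ_lower A m hA₁
  have hφA₂ := hφ_upper A M hA₂
  have hφA := isSelfAdjoint_of_smul_one_le hφA₁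
  have hsp := spectrum_mem_Icc hφA₁ hφA₂
  rw [h_split, ← hh₁']
  refine ⟨?_, ?_, ?_⟩
  · refine cfc_mono (fun t ht => ?_) (hf_cont.mono hsp) h_cont.continuousOn
    have ht := hsp t ht
    have key := hf_logconv.2
    replace key := key hmI hMI
      (a := (M - t) / (M - m)) (b := (t - m) / (M - m))
      (div_nonneg (by linarith [ht.2]) hL.le) (div_nonneg (by linarith [ht.1]) hL.le)
      (by field_simp; ring)
    simp only [smul_eq_mul] at key
    have e1 : (M - t) / (M - m) * m + (t - m) / (M - m) * M = t := by field_simp; ring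
    rw [e1] at key
    rw [h_exp, ← Real.log_le_iff_le_exp (hf_pos t ht)]
    refine key.trans_eq ?_
    rw [hl, hk]
    field_simp
    ring
  · have s1 := affine_cfc_le hφA₁ hφA₂ (u := h) (v := id) h_cont.continuousOn continuousOn_id
      (a := 1) (b := 0) (a' := chordSlope m M h) (b' := chordIntercept m M h)
      (fun x hx => by simpa using (h_sand x hx).1)
    have s2 := affine_cfc_le hA₁ hA₂ (u := id) (v := h) continuousOn_id h_cont.continuousOn
      (fun x hx => (h_sand x hx).2)
    rw [cfc_id ℝ (φ A), one_smul, zero_smul, add_zero] at s1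
    rw [cfc_id ℝ A] at s2
    have s3 := hφ_mono _ _ s2
    rw [hφ_aff, hφ_aff] at s3
    exact s1.trans s3
  · set B := cfc g A with hB
    have hspA := spectrum_mem_Icc hA₁ hA₂
    have hB₁ : (f m ^ (M - m)) • (1 : H →L[ℂ] H) ≤ B := by
      rw [← Algebra.algebraMap_eq_smul_one]
      exact algebraMap_le_cfc g _ A (fun x hx => (hg_mem x (hspA x hx)).1) hg_cont.continuousOn hA
    have hB₂ : B ≤ (f M ^ (M - m)) • (1 : H →L[ℂ] H) := by
      rw [← Algebra.algebraMap_eq_smul_one]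
      exact cfc_le_algebraMap g _ A (fun x hx => (hg_mem x (hspA x hx)).2) hg_cont.continuousOn hA
    have hφB₁ := hφ_lower B _ hB₁
    have hφB₂ := hφ_upper B _ hB₂
    have hφB := isSelfAdjoint_of_smul_one_le hφB₁
    have s1 := affine_cfc_le hA₁ hA₂ (u := h) (v := g) h_cont.continuousOn hg_cont.continuousOn
      (a := 1) (b := 0) (fun x hx => by
        have := (h₁_sand (g x) (hg_mem x hx)).1
        rw [hh₁, ← hh x] at this
        simpa using this)
    have s2 := affine_cfc_le hφB₁ hφB₂ (u := id) (v := h₁) continuousOn_id h₁_cont.continuousOn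
      (fun x hx => (h₁_sand x hx).2)
    rw [cfc_id ℝ (φ B)] at s2
    rw [one_smul, zero_smul, add_zero] at s1
    have s3 := hφ_mono _ _ s1
    rw [hφ_aff] at s3
    have s4 := add_le_add_left (smul_le_smul_of_nonneg_left (s3.trans s2) hα)
      (mpBeta m M h t₀ • (1 : K →L[ℂ] K))
    refine s4.trans_eq ?_
    rw [smul_add, smul_smul, smul_smul, add_smul, add_assoc]
end

section
/- Let 0 < m < M, let f : [m,M] → (0,∞) be continuous and log-convex with f(m) ≠ f(M), let A be a bounded self-adjoint operator on a complex Hilbert space H with mI ≤ A ≤ MI, and let φ : B(H) → B(K) be a normalized positive linear map. Define h(t) = (f(M)^{t-m} f(m)^{M-t})^{1/(M-m)} on [m,M], and for t₀ ∈ (m,M) set α = α(h,t₀), β = β(h,t₀), and μ(m,M,f) = max_{m ≤ t ≤ M} (1/f(t)) · (((M-t)f(m) + (t-m)f(M))/(M-m)). Then f(φ(A)) ≤ (f(M)^{φ(A)-m} f(m)^{M-φ(A)})^{1/(M-m)} ≤ α · φ(f(M)^{(A-m)/(M-m)} f(m)^{(M-A)/(M-m)}) + β·I ≤ α·μ(m,M,f)·φ(f(A))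 + β·I. -/
/-!
Since `h t = exp (c t + d)` interpolates `f` at `m` and `M`, everything reduces to scalar
inequalities on `[m, M]`, carried to operators by the functional calculus and by positivity of `φ`.

* `f ≤ h`, because `log f` is convex and `log h` is its chord.
* `h ≤ ℓ`, where `ℓ t = a_h t + b_h` is the chord of `h`, by the weighted AM-GM inequality.
* `h t ≥ h t₀ + h' t₀ (t - t₀)`, by convexity of `exp`.
* `ℓ ≤ μ f`, by the choice of `μ`.

The spectra of `A` and `φ A` lie in `[m, M]`. The tangent inequality at `A`, mapped through `φ` and
multiplied by `α`, reads `ℓ(φ A) ≤ α φ(h(A)) + β`. Here `α ≥ 0`, because the slope `a_h` has the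
same sign as `h' t₀`. With `h(φ A) ≤ ℓ(φ A)` this is the second inequality, and `h ≤ ℓ ≤ μ f`
gives the third.
-/

section Operator

variable {H : Type*} [NormedAddCommGroup H] [InnerProductSpace ℂ H] [CompleteSpace H]

lemma spectrum_subset_Icc_of_bounds {m M : ℝ} {A : H →L[ℂ] H} (hA : IsSelfAdjoint A)
    (h₁ : m • (1 : H →L[ℂ] H) ≤ A) (h₂ : A ≤ M • (1 : H →L[ℂ] H)) :
    spectrum ℝ A ⊆ Set.Icc m M := by
  rw [← Algebra.algebraMap_eq_smul_one] at h₁ h₂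
  intro x hx
  exact ⟨(algebraMap_le_iff_le_spectrum (a := A)).1 h₁ x hx,
    (le_algebraMap_iff_spectrum_le (a := A)).1 h₂ x hx⟩

lemma cfc_affine {A : H →L[ℂ] H} (hA : IsSelfAdjoint A) (a b : ℝ) :
    cfc (fun t : ℝ => a * t + b) A = a • A + b • 1 := by
  rw [cfc_add_const b (fun t : ℝ => a * t) A, cfc_const_mul_id a A,
    Algebra.algebraMap_eq_smul_one]

end Operator

/-- The geometric interpolation of `p` at `m` and `q` at `M`, as the exponential of an affine
function. -/
lemma geom_interp_eq_exp {m M p q : ℝ} (hp : 0 < p) (hq : 0 < q) (t : ℝ) :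
    q ^ ((t - m) / (M - m)) * p ^ ((M - t) / (M - m)) =
      Real.exp ((Real.log q - Real.log p) / (M - m) * t +
        (M * Real.log p - m * Real.log q) / (M - m)) := by
  rw [Real.rpow_def_of_pos hq, Real.rpow_def_of_pos hp, ← Real.exp_add]
  congr 1
  ring

lemma exp_affine_tangent (c d t s : ℝ) :
    c * Real.exp (c * s + d) * t + (Real.exp (c * s + d) - c * Real.exp (c * s + d) * s) ≤
      Real.exp (c * t + d) := by
  have h := Real.add_one_le_exp (c * t - c * s)
  have e : Real.exp (c * t + d) = Real.exp (c * s + d) * Real.exp (c * t - c * s) := by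
    rw [← Real.exp_add]; congr 1; ring
  rw [e]
  nlinarith [mul_le_mul_of_nonneg_left h (Real.exp_pos (c * s + d)).le]


theorem exp_chord_reverse_chain_with_mu
    {H K : Type*} [NormedAddCommGroup H] [InnerProductSpace ℂ H] [CompleteSpace H]
    [NormedAddCommGroup K] [InnerProductSpace ℂ K] [CompleteSpace K]
    (m M : ℝ) (hm : 0 < m) (hmM : m < M)
    (f : ℝ → ℝ) (hf_cont : ContinuousOn f (Set.Icc m M))
    (hf_pos : ∀ t ∈ Set.Icc m M, 0 < f t)
    (hf_logconv : ConvexOn ℝ (Set.Icc m M) (fun t => Real.log (f t)))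
    (A : H →L[ℂ] H) (hA : IsSelfAdjoint A)
    (hA₁ : m • (1 : H →L[ℂ] H) ≤ A) (hA₂ : A ≤ M • (1 : H →L[ℂ] H))
    (φ : (H →L[ℂ] H) →ₗ[ℂ] (K →L[ℂ] K))
    (hφ_pos : ∀ X : H →L[ℂ] H, 0 ≤ X → 0 ≤ φ X)
    (hφ_one : φ 1 = 1)
    (h : ℝ → ℝ)
    (hh : ∀ t, h t = (f M ^ (t - m) * f m ^ (M - t)) ^ (1 / (M - m)))
    (t₀ : ℝ) (ht₀ : t₀ ∈ Set.Ioo m M)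
    (hfmM : f m ≠ f M)
    (μ : ℝ)
    (hμ : IsGreatest
      ((fun t => (((M - t) * f m + (t - m) * f M) / (M - m)) / f t) '' Set.Icc m M) μ) :
    cfc f (φ A) ≤ cfc h (φ A) ∧
      cfc h (φ A) ≤
        mpAlpha m M h t₀ •
            φ (cfc (fun t : ℝ => f M ^ ((t - m) / (M - m)) * f m ^ ((M - t) / (M - m))) A) +
          mpBeta m M h t₀ • 1 ∧
      mpAlpha m M h t₀ •
            φ (cfc (fun t : ℝ => f M ^ ((t - m) / (M - m)) * f m ^ ((M - t) / (M - m))) A) +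
          mpBeta m M h t₀ • 1 ≤
        (mpAlpha m M h t₀ * μ) • φ (cfc f A) + mpBeta m M h t₀ • 1 := by
  have hd : 0 < M - m := sub_pos.2 hmM
  have hmem : m ∈ Set.Icc m M := ⟨le_rfl, hmM.le⟩
  have hMem : M ∈ Set.Icc m M := ⟨hmM.le, le_rfl⟩
  have hp : 0 < f m := hf_pos m hmem
  have hq : 0 < f M := hf_pos M hMem
  have hgeom : ∀ t, h t = f M ^ ((t - m) / (M - m)) * f m ^ ((M - t) / (M - m)) := by
    intro t
    rw [hh, Real.mul_rpow (Real.rpow_nonneg hq.le _) (Real.rpow_nonneg hp.le _),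
      ← Real.rpow_mul hq.le, ← Real.rpow_mul hp.le, mul_one_div, mul_one_div]
  rw [show (fun t : ℝ => f M ^ ((t - m) / (M - m)) * f m ^ ((M - t) / (M - m))) = h from
    (funext hgeom).symm]
  obtain ⟨c, hc⟩ : ∃ c, c = (Real.log (f M) - Real.log (f m)) / (M - m) := ⟨_, rfl⟩
  obtain ⟨d, hdd⟩ : ∃ d, d = (M * Real.log (f m) - m * Real.log (f M)) / (M - m) := ⟨_, rfl⟩
  have hexp : ∀ t, h t = Real.exp (c * t + d) := by
    intro t
    rw [hgeom, geom_interp_eq_exp hp hq, hc, hdd]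
  have hhm : h m = f m := by
    rw [hgeom, sub_self, zero_div, div_self hd.ne', Real.rpow_zero, Real.rpow_one, one_mul]
  have hhM : h M = f M := by
    rw [hgeom, sub_self, zero_div, div_self hd.ne', Real.rpow_zero, Real.rpow_one, mul_one]
  have hderiv : deriv h t₀ = c * h t₀ := by
    rw [funext hexp]
    have := (((hasDerivAt_id t₀).const_mul c).add_const d).exp
    simpa [mul_comm] using this.deriv
  have hcont : Continuous h := by
    rw [funext hexp]; fun_prop
  have hh₀ : 0 < h t₀ := by rw [hexp]; exact Real.exp_pos _
  have hfh : ∀ t ∈ Set.Icc m M, f t ≤ h t := by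
    intro t ht
    have hw₀ : 0 ≤ (M - t) / (M - m) := div_nonneg (sub_nonneg.2 ht.2) hd.le
    have hw₁ : 0 ≤ (t - m) / (M - m) := div_nonneg (sub_nonneg.2 ht.1) hd.le
    have hconv := hf_logconv.2 hmem hMem hw₀ hw₁ (by field_simp; ring)
    have ht' : ((M - t) / (M - m)) • m + ((t - m) / (M - m)) • M = t := by
      simp only [smul_eq_mul]; field_simp; ring
    rw [ht'] at hconv
    rw [hexp, ← Real.log_le_iff_le_exp (hf_pos t ht)]
    refine hconv.trans (le_of_eq ?_)
    simp only [smul_eq_mul, hc, hdd]; ring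
  have hchord : ∀ t ∈ Set.Icc m M,
      h t ≤ chordSlope m M h * t + chordIntercept m M h := by
    intro t ht
    have := Real.geom_mean_le_arith_mean2_weighted
      (div_nonneg (sub_nonneg.2 ht.1) hd.le) (div_nonneg (sub_nonneg.2 ht.2) hd.le) hq.le hp.le
      (show (t - m) / (M - m) + (M - t) / (M - m) = 1 by field_simp; ring)
    rw [← hgeom] at this
    refine this.trans (le_of_eq ?_)
    rw [chordSlope, chordIntercept, hhm, hhM]; ring
  have hμf : ∀ t ∈ Set.Icc m M, h t ≤ μ * f t := by
    intro t ht
    have h1 := hμ.2 ⟨t, ht, rfl⟩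
    simp only [div_le_iff₀ (hf_pos t ht)] at h1
    refine ((hchord t ht).trans (le_of_eq ?_)).trans h1
    rw [chordSlope, chordIntercept, hhm, hhM]; ring
  have htan : ∀ t, deriv h t₀ * t + (h t₀ - deriv h t₀ * t₀) ≤ h t := by
    intro t
    rw [hderiv, hexp, hexp]
    exact exp_affine_tangent c d t t₀
  have hlog : Real.log (f M) - Real.log (f m) ≠ 0 := fun h0 =>
    hfmM (Real.log_injOn_pos hp hq (sub_eq_zero.1 h0).symm)
  have hd₀ : deriv h t₀ ≠ 0 := by
    rw [hderiv, hc]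
    exact mul_ne_zero (div_ne_zero hlog hd.ne') hh₀.ne'
  -- Slope and derivative of `h` are both positive or both negative, as `f m < f M` or `f M < f m`.
  have hα : 0 ≤ mpAlpha m M h t₀ := by
    rw [mpAlpha, chordSlope, hhm, hhM, hderiv, hc]
    rcases lt_or_gt_of_ne hfmM with hlt | hlt
    · have h1 : 0 < Real.log (f M) - Real.log (f m) := sub_pos.2 (Real.log_lt_log hp hlt)
      have h2 := sub_pos.2 hlt
      positivity
    · have h1 := sub_neg.2 (Real.log_lt_log hq hlt)
      exact div_nonneg_of_nonpos (div_nonpos_of_nonpos_of_nonneg (sub_neg.2 hlt).le hd.le)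
        (mul_nonpos_of_nonpos_of_nonneg (div_nonpos_of_nonpos_of_nonneg h1.le hd.le) hh₀.le)
  have hφ_mono : ∀ X Y : H →L[ℂ] H, X ≤ Y → φ X ≤ φ Y := by
    intro X Y hXY
    have := hφ_pos (Y - X) (sub_nonneg.2 hXY)
    rwa [map_sub, sub_nonneg] at this
  have hφ_smul : ∀ (r : ℝ) (X : H →L[ℂ] H), φ (r • X) = r • φ X :=
    fun r X => φ.map_smul_of_tower r X
  have hB₁ : m • (1 : K →L[ℂ] K) ≤ φ A := by
    rw [← hφ_one, ← hφ_smul]; exact hφ_mono _ _ hA₁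
  have hB₂ : φ A ≤ M • (1 : K →L[ℂ] K) := by
    rw [← hφ_one, ← hφ_smul]; exact hφ_mono _ _ hA₂
  have hB : IsSelfAdjoint (φ A) :=
    IsSelfAdjoint.of_nonneg ((smul_nonneg hm.le zero_le_one).trans hB₁)
  have hsA := spectrum_subset_Icc_of_bounds hA hA₁ hA₂
  have hsB := spectrum_subset_Icc_of_bounds hB hB₁ hB₂
  refine ⟨?_, ?_, ?_⟩
  · exact cfc_mono (fun t ht => hfh t (hsB ht)) (hf_cont.mono hsB) hcont.continuousOn
  · have h1 : cfc h (φ A) ≤ chordSlope m M h • φ A + chordIntercept m M h • 1 := by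
      rw [← cfc_affine hB]
      exact cfc_mono (fun t ht => hchord t (hsB ht)) hcont.continuousOn (by fun_prop)
    have h2 : deriv h t₀ • A + (h t₀ - deriv h t₀ * t₀) • 1 ≤ cfc h A := by
      rw [← cfc_affine hA]
      exact cfc_mono (fun t _ => htan t) (by fun_prop) hcont.continuousOn
    have h3 := smul_le_smul_of_nonneg_left (hφ_mono _ _ h2) hα
    rw [map_add, hφ_smul, hφ_smul, hφ_one] at h3
    refine h1.trans (le_trans (le_of_eq ?_) (add_le_add_left h3 (mpBeta m M h t₀ • 1)))
    rw [smul_add, smul_smul, smul_smul, add_assoc, ← add_smul]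
    congr 2
    · rw [mpAlpha]; field_simp
    · rw [mpAlpha, mpBeta]; field_simp; ring
  · have h1 : cfc h A ≤ μ • cfc f A := by
      rw [← cfc_const_mul μ f A (hf_cont.mono hsA)]
      exact cfc_mono (fun t ht => hμf t (hsA ht)) hcont.continuousOn
        ((hf_cont.mono hsA).const_mul μ)
    have h2 := smul_le_smul_of_nonneg_left (hφ_mono _ _ h1) hα
    rw [hφ_smul, smul_smul] at h2
    exact add_le_add_left h2 _
end

section
/- Let 0 < m < M with M − m ≥ 1, let f : [m,M] → (0,∞) be continuous and log-convex with f(m) ≠ f(M), let A be a bounded self-adjoint operator on a complex Hilbert space H with mI ≤ A ≤ MI, and let φ : B(H) → B(K) be a normalized positive linear map. Define ĥ(t) = f(M)^{t-m} f(m)^{M-t} on [m,M], and for t₀ ∈ (m,M) set α̂ = α(ĥ,t₀) and β̂ = β(ĥ,t₀). Then φ(f(A)) ≤ (φ(f(M)^{A-m} f(m)^{M-A}))^{1/(M-m)} ≤ (α̂ · f(M)^{φ(A)-m} f(m)^{M-φ(A)} + β̂·I)^{1/(M-m)}. -/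
/-! ### Jensen's inequality for positive unital maps and fractional powers -/

section
open Set MeasureTheory Filter Topology
open scoped NNReal unitInterval

variable {B : Type*} [CStarAlgebra B] [PartialOrder B] [StarOrderedRing B]

/-- A positive linear map on the commutative algebra `C([0,1])` satisfies the 2-positivity inequality
`c ψ(p²) c - c ψ(pq) - ψ(pq) c + ψ(q²) ≥ 0`. Replacing each function by its Bernstein approximation
turns the left side into `∑ₖ (p(k/n) c - q(k/n)) ψ(bₙₖ) (p(k/n) c - q(k/n))`. -/
lemma quad_nonneg (ψ : C(I, ℝ) →L[ℝ] B) (hψ : ∀ g, 0 ≤ g → 0 ≤ ψ g) (p q : C(I, ℝ))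
    {c : B} (hc : IsSelfAdjoint c) :
    0 ≤ c * ψ (p * p) * c - c * ψ (p * q) - ψ (p * q) * c + ψ (q * q) := by
  have hlim (g : C(I, ℝ)) : Tendsto (fun n => ψ (bernsteinApproximation n g)) atTop (𝓝 (ψ g)) :=
    (ψ.continuous.tendsto g).comp (bernsteinApproximation_uniform g)
  have happ (n : ℕ) (g : C(I, ℝ)) : ψ (bernsteinApproximation n g) =
      ∑ k : Fin (n + 1), g (bernstein.z k) • ψ (bernstein n k) := by
    rw [bernsteinApproximation, map_sum]
    refine Finset.sum_congr rfl fun k _ => ?_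
    rw [← map_smul]
    congr 1
    ext x
    simp [mul_comm]
  refine ge_of_tendsto'
    (((((hlim (p * p)).const_mul c).mul_const c).sub ((hlim (p * q)).const_mul c)).sub
      ((hlim (p * q)).mul_const c) |>.add (hlim (q * q))) fun n => ?_
  simp only [happ, Finset.mul_sum, Finset.sum_mul, ← Finset.sum_sub_distrib,
    ← Finset.sum_add_distrib]
  refine Finset.sum_nonneg fun k _ => ?_
  set F := ψ (bernstein n k)
  have hF : 0 ≤ F := hψ _ fun x => bernstein_nonneg
  have hd : IsSelfAdjoint (p (bernstein.z k) • c - q (bernstein.z k) • (1 : B)) :=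
    .sub (.smul (.all _) hc) (.smul (.all _) (.one B))
  convert hd.conjugate_nonneg hF using 1
  simp only [ContinuousMap.mul_apply, sub_mul, mul_sub, smul_mul_assoc, mul_smul_comm, one_mul,
    mul_one, smul_sub, smul_smul]
  rw [mul_comm (q (bernstein.z k)) (p (bernstein.z k))]
  abel

variable {A : Type*} [CStarAlgebra A] [PartialOrder A] [StarOrderedRing A]

/-- Choi's inequality `φ(l + X)⁻¹ ≤ φ((l + X)⁻¹)` for a positive unital map `φ`. -/
lemma choi_inv (φ : A →L[ℝ] B) (hpos : ∀ x, 0 ≤ x → 0 ≤ φ x) (hone : φ 1 = 1)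
    {X : A} (hX : 0 ≤ X) {l : ℝ} (hl : 0 < l) :
    cfc (fun x : ℝ => (l + x)⁻¹) (φ X) ≤ φ (cfc (fun x : ℝ => (l + x)⁻¹) X) := by
  have hXs : IsSelfAdjoint X := .of_nonneg hX
  have hY : 0 ≤ φ X := hpos X hX
  have hYs : IsSelfAdjoint (φ X) := .of_nonneg hY
  have hsX : ∀ x ∈ spectrum ℝ X, 0 ≤ x := fun x hx => spectrum_nonneg_of_nonneg hX hx
  have hsY : ∀ x ∈ spectrum ℝ (φ X), 0 ≤ x := fun x hx => spectrum_nonneg_of_nonneg hY hx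
  obtain ⟨b, hb0, hb⟩ : ∃ b : ℝ, 0 < b ∧ ∀ x ∈ spectrum ℝ X, x ≤ b := by
    obtain ⟨b, hb⟩ := (spectrum.isCompact (𝕜 := ℝ) X).bddAbove
    exact ⟨max b 1, by positivity, fun x hx => (hb hx).trans (le_max_left _ _)⟩
  -- `κ` pulls functions on `[0,1]` back to the spectrum of `X`.
  let κ : C(spectrum ℝ X, I) :=
    ⟨fun x => ⟨x / b, div_nonneg (hsX x x.2) hb0.le, (div_le_one hb0).2 (hb x x.2)⟩,
      by fun_prop⟩
  have hκ (x) : b * (κ x : ℝ) = x := by simp only [κ, ContinuousMap.coe_mk]; field_simp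
  let ρ : C(I, ℝ) →L[ℝ] C(spectrum ℝ X, ℝ) :=
    ⟨(ContinuousMap.compStarAlgHom' ℝ ℝ κ).toAlgHom.toLinearMap,
      (ContinuousMap.compRightContinuousMap ℝ κ).continuous⟩
  let ψ : C(I, ℝ) →L[ℝ] B := φ.comp ((cfcL hXs).comp ρ)
  have hψ : ∀ g, 0 ≤ g → 0 ≤ ψ g := fun g hg =>
    hpos _ ((cfcHom_nonneg_iff hXs).2 fun x => hg (κ x))
  have hψ' (g : C(I, ℝ)) (u : ℝ → ℝ) (hu : ContinuousOn u (spectrum ℝ X))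
      (h : ∀ x, g (κ x) = u x) : ψ g = φ (cfc u X) := by
    rw [cfc_eq_cfcL hXs hu]
    simp only [ψ, ContinuousLinearMap.comp_apply]
    congr 2
    ext x
    exact h x
  have hp (s : I) : 0 < l + b * (s : ℝ) := by
    have := s.2.1
    positivity
  -- With these `p`, `q`, pulled back along `κ`: `p² = l + x`, `p q = 1` and `q² = (l + x)⁻¹`.
  let p : C(I, ℝ) := ⟨fun s => √(l + b * s), by fun_prop⟩
  let q : C(I, ℝ) := ⟨fun s => (√(l + b * s))⁻¹,
    Continuous.inv₀ (by fun_prop) fun s => (Real.sqrt_pos.2 (hp s)).ne'⟩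
  have hcX : ContinuousOn (fun x : ℝ => (l + x)⁻¹) (spectrum ℝ X) :=
    ContinuousOn.inv₀ (by fun_prop) fun x hx => by linarith [hsX x hx]
  have hcY : ContinuousOn (fun x : ℝ => (l + x)⁻¹) (spectrum ℝ (φ X)) :=
    ContinuousOn.inv₀ (by fun_prop) fun x hx => by linarith [hsY x hx]
  have h1 : ψ (p * p) = cfc (fun x : ℝ => l + x) (φ X) := by
    rw [hψ' _ (fun x => l + x) (by fun_prop)
      (fun x => (Real.mul_self_sqrt (hp (κ x)).le).trans (by rw [hκ]))]
    rw [cfc_const_add l (fun x => x) X, cfc_const_add l (fun x => x) (φ X), cfc_id' ℝ X,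
      cfc_id' ℝ (φ X), map_add, Algebra.algebraMap_eq_smul_one, map_smul, hone,
      Algebra.algebraMap_eq_smul_one]
  have h2 : ψ (p * q) = 1 := by
    rw [hψ' _ (fun x => 1) (by fun_prop)
      (fun x => by simp [p, q, mul_inv_cancel₀ (Real.sqrt_pos.2 (hp (κ x))).ne']),
      cfc_const_one ℝ X, hone]
  have h3 : ψ (q * q) = φ (cfc (fun x : ℝ => (l + x)⁻¹) X) :=
    hψ' _ _ hcX fun x => (mul_inv _ _).symm.trans
      (by rw [Real.mul_self_sqrt (hp (κ x)).le, hκ])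
  set c := cfc (fun x : ℝ => (l + x)⁻¹) (φ X)
  have hc : IsSelfAdjoint c := cfc_predicate _ _
  have h4 : c * cfc (fun x : ℝ => l + x) (φ X) = 1 := by
    rw [← cfc_mul _ _ (φ X) hcY (by fun_prop), ← cfc_const_one ℝ (φ X)]
    refine cfc_congr fun x hx => ?_
    have : l + x ≠ 0 := by linarith [hsY x hx]
    simp [this]
  -- For `c = (l + φ X)⁻¹` the quadratic expression collapses to `φ((l + X)⁻¹) - c`.
  have := quad_nonneg ψ hψ p q hc
  rw [h1, h2, h3, h4] at this
  simp only [one_mul, mul_one, sub_self, zero_sub] at this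
  exact sub_nonneg.1 (by rwa [sub_eq_neg_add])

/-- The integrand of the integral representation of `x ^ r`, expressed through the resolvent. -/
lemma cfcₙ_rpowIntegrand_eq {Y : A} (hY : 0 ≤ Y) {r t : ℝ} (hr : r ∈ Ioo 0 1) (ht : 0 < t) :
    cfcₙ (Real.rpowIntegrand₀₁ r t) Y =
      t ^ (r - 1) • (1 : A) - t ^ r • cfc (fun x : ℝ => (t + x)⁻¹) Y := by
  have hs : ∀ x ∈ spectrum ℝ Y, 0 ≤ x := fun x hx => spectrum_nonneg_of_nonneg hY hx
  have hg : ContinuousOn (fun x : ℝ => (t + x)⁻¹) (spectrum ℝ Y) :=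
    ContinuousOn.inv₀ (by fun_prop) fun x hx => by linarith [hs x hx]
  have hq : quasispectrum ℝ Y ⊆ Ici 0 := by grind
  rw [cfcₙ_eq_cfc ((Real.continuousOn_rpowIntegrand₀₁_Ici hr ht).mono hq)
    Real.rpowIntegrand₀₁_zero_right, Real.rpowIntegrand₀₁_eq_sub hr.2.ne ht,
    cfc_sub (fun _ : ℝ => t ^ (r - 1)) (fun x : ℝ => t ^ r * (t + x)⁻¹) Y (by fun_prop)
      (by fun_prop), cfc_const _ Y, cfc_const_mul _ _ Y hg, Algebra.algebraMap_eq_smul_one]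

/-- Jensen's inequality for the operator concave integrand of `x ^ r`. -/
lemma map_cfcₙ_rpowIntegrand_le (φ : A →L[ℝ] B) (hpos : ∀ x, 0 ≤ x → 0 ≤ φ x) (hone : φ 1 = 1)
    {X : A} (hX : 0 ≤ X) {r t : ℝ} (hr : r ∈ Ioo 0 1) (ht : 0 < t) :
    φ (cfcₙ (Real.rpowIntegrand₀₁ r t) X) ≤ cfcₙ (Real.rpowIntegrand₀₁ r t) (φ X) := by
  rw [cfcₙ_rpowIntegrand_eq hX hr ht, cfcₙ_rpowIntegrand_eq (hpos X hX) hr ht, map_sub, map_smul,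
    map_smul, hone]
  gcongr
  exact choi_inv φ hpos hone hX ht

/-- Integral representation of `a ^ p` with respect to a measure `μ` representing the scalar function
`x ^ p`. Unlike `CFC.exists_measure_nnrpow_eq_integral_cfcₙ_rpowIntegrand₀₁`, the measure is given
beforehand, so that one `μ` serves both the domain and the codomain of a positive map. -/
lemma nnrpow_eq_integral {p : ℝ≥0} (hp : p ∈ Ioo 0 1) {μ : Measure ℝ}
    (hμ : ∀ x ∈ Ici (0 : ℝ),
      IntegrableOn (fun t => Real.rpowIntegrand₀₁ p t x) (Ioi 0) μ ∧
        x ^ (p : ℝ) = ∫ t in Ioi 0, Real.rpowIntegrand₀₁ p t x ∂μ) {a : A} (ha : 0 ≤ a) :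
    IntegrableOn (fun t => cfcₙ (Real.rpowIntegrand₀₁ p t) a) (Ioi 0) μ ∧
      a ^ p = ∫ t in Ioi 0, cfcₙ (Real.rpowIntegrand₀₁ p t) a ∂μ := by
  have hp' : (p : ℝ) ∈ Ioo 0 1 := ⟨by exact_mod_cast hp.1, by exact_mod_cast hp.2⟩
  have hq : ∀ x ∈ quasispectrum ℝ a, 0 ≤ x := by grind
  obtain ⟨R, hR0, hR⟩ : ∃ R : ℝ, 0 ≤ R ∧ ∀ x ∈ quasispectrum ℝ a, x ≤ R := by
    obtain ⟨b, hb⟩ := (quasispectrum.isCompact (𝕜 := ℝ) a).bddAbove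
    exact ⟨max b 0, le_max_right _ _, fun x hx => (hb hx).trans (le_max_left _ _)⟩
  have hcont : ContinuousOn (Function.uncurry fun t => Real.rpowIntegrand₀₁ p t)
      (Ioi (0 : ℝ) ×ˢ quasispectrum ℝ a) :=
    Real.continuousOn_rpowIntegrand₀₁_uncurry hp' _ hq
  have hbound : ∀ᵐ t ∂μ.restrict (Ioi 0), ∀ z ∈ quasispectrum ℝ a,
      ‖Real.rpowIntegrand₀₁ p t z‖ ≤ ‖Real.rpowIntegrand₀₁ p t R‖ := by
    filter_upwards [ae_restrict_mem measurableSet_Ioi] with t ht z hz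
    rw [Real.norm_of_nonneg (Real.rpowIntegrand₀₁_nonneg hp'.1 (le_of_lt ht) (hq z hz)),
      Real.norm_of_nonneg (Real.rpowIntegrand₀₁_nonneg hp'.1 (le_of_lt ht) hR0)]
    exact Real.rpowIntegrand₀₁_monotoneOn hp' (le_of_lt ht) (hq z hz) hR0 (hR z hz)
  have hfin : HasFiniteIntegral (fun t => ‖Real.rpowIntegrand₀₁ p t R‖) (μ.restrict (Ioi 0)) := by
    rw [hasFiniteIntegral_norm_iff]
    exact (hμ R hR0).1.2
  have hzero : ∀ᵐ t ∂μ.restrict (Ioi 0), Real.rpowIntegrand₀₁ p t 0 = 0 :=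
    .of_forall fun _ => Real.rpowIntegrand₀₁_zero_right
  refine ⟨integrableOn_cfcₙ measurableSet_Ioi _ _ a hcont hzero hbound hfin, ?_⟩
  rw [CFC.nnrpow_eq_cfcₙ_real _ _]
  exact (cfcₙ_congr fun x hx => (hμ x (hq x hx)).2).trans
    (cfcₙ_setIntegral measurableSet_Ioi _ _ a hcont hzero hbound hfin ha.isSelfAdjoint)

/-- Davis–Choi–Jensen inequality for the operator concave power `x ^ r`, `0 < r ≤ 1`. -/
lemma map_rpow_le_s15 (φ : A →L[ℝ] B) (hpos : ∀ x, 0 ≤ x → 0 ≤ φ x) (hone : φ 1 = 1)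
    {X : A} (hX : 0 ≤ X) {r : ℝ} (hr : r ∈ Ioc 0 1) :
    φ (X ^ r) ≤ φ X ^ r := by
  obtain rfl | hr1 := hr.2.eq_or_lt
  · rw [CFC.rpow_one X, CFC.rpow_one (φ X) (hpos X hX)]
  lift r to ℝ≥0 using hr.1.le
  have hr' : r ∈ Ioo 0 1 := ⟨by exact_mod_cast hr.1, by exact_mod_cast hr1⟩
  have hr'' : (r : ℝ) ∈ Ioo 0 1 := ⟨hr.1, hr1⟩
  obtain ⟨μ, hμ⟩ := Real.exists_measure_rpow_eq_integral_rpowIntegrand₀₁ hr''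
  obtain ⟨i1, e1⟩ := nnrpow_eq_integral hr' hμ hX
  obtain ⟨i2, e2⟩ := nnrpow_eq_integral hr' hμ (hpos X hX)
  rw [← CFC.nnrpow_eq_rpow hr'.1, ← CFC.nnrpow_eq_rpow hr'.1, e1, e2,
    ← φ.integral_comp_comm i1]
  refine integral_mono_ae (φ.integrable_comp i1) i2 ?_
  filter_upwards [ae_restrict_mem measurableSet_Ioi] with t ht
  exact map_cfcₙ_rpowIntegrand_le φ hpos hone hX hr'' ht

/-! ### Scalar inequalities -/

/-- A convex function lies below its chord. -/
lemma le_chord {m M : ℝ} (hmM : m < M) {g : ℝ → ℝ} (hg : ConvexOn ℝ univ g) {t : ℝ}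
    (ht : t ∈ Icc m M) : g t ≤ chordSlope m M g * t + chordIntercept m M g := by
  have hp : 0 < M - m := sub_pos.2 hmM
  have ha : 0 ≤ (M - t) / (M - m) := div_nonneg (by linarith [ht.2]) hp.le
  have hb : 0 ≤ (t - m) / (M - m) := div_nonneg (by linarith [ht.1]) hp.le
  have h := hg.2 (mem_univ m) (mem_univ M) ha hb (by field_simp; ring)
  have e : ((M - t) / (M - m)) • m + ((t - m) / (M - m)) • M = t := by
    simp only [smul_eq_mul]; field_simp; ring
  rw [e] at h
  refine h.trans_eq ?_
  simp only [smul_eq_mul, chordSlope, chordIntercept]; field_simp; ring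

/-- The constants `α`, `β` are chosen so that `α g + β` lies above the chord line: the chord line
equals `α` times the tangent of `g` at `t₀`, plus `β`. -/
lemma chord_le_mond_pecaric {m M : ℝ} {g : ℝ → ℝ} {t₀ : ℝ} (hd : deriv g t₀ ≠ 0)
    (hα : 0 ≤ mpAlpha m M g t₀) (htan : ∀ s, g t₀ + deriv g t₀ * (s - t₀) ≤ g s) (s : ℝ) :
    chordSlope m M g * s + chordIntercept m M g ≤ mpAlpha m M g t₀ * g s + mpBeta m M g t₀ := by
  have h := mul_le_mul_of_nonneg_left (htan s) hα
  have h1 : mpAlpha m M g t₀ * deriv g t₀ = chordSlope m M g := div_mul_cancel₀ _ hd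
  have h2 : mpBeta m M g t₀ =
      chordSlope m M g * t₀ + chordIntercept m M g - mpAlpha m M g t₀ * g t₀ := by
    rw [mpBeta, mpAlpha]; ring
  have h3 : mpAlpha m M g t₀ * (g t₀ + deriv g t₀ * (s - t₀)) =
    mpAlpha m M g t₀ * g t₀ + chordSlope m M g * (s - t₀) := by rw [← h1]; ring
  rw [h2]
  linarith

/-- The function `v ^ (t - m) * u ^ (M - t)` is the exponential of a nonconstant affine function, hence
positive, continuous, convex, above its tangents, and strictly monotone; the latter makes the chord
slope and the derivative have the same sign. -/
lemma hhat_facts {m M : ℝ} (hmM : m < M) {u v : ℝ} (hu : 0 < u) (hv : 0 < v) (huv : u ≠ v)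
    {h : ℝ → ℝ} (hh : ∀ t, h t = v ^ (t - m) * u ^ (M - t)) (t₀ : ℝ) :
    (∀ t, 0 < h t) ∧ Continuous h ∧ ConvexOn ℝ univ h ∧ deriv h t₀ ≠ 0 ∧
      0 ≤ mpAlpha m M h t₀ ∧ ∀ s, h t₀ + deriv h t₀ * (s - t₀) ≤ h s := by
  obtain ⟨c, d, hc0, rfl⟩ : ∃ c d : ℝ, c ≠ 0 ∧ h = fun t => Real.exp (c * t + d) := by
    refine ⟨Real.log v - Real.log u, M * Real.log u - m * Real.log v, ?_, ?_⟩
    · intro h0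
      exact huv (Real.log_injOn_pos hu hv (by linarith))
    · funext t
      rw [hh, Real.rpow_def_of_pos hv, Real.rpow_def_of_pos hu, ← Real.exp_add]
      congr 1; ring
  have hder : deriv (fun t => Real.exp (c * t + d)) t₀ = Real.exp (c * t₀ + d) * c :=
    ((((hasDerivAt_id t₀).const_mul c).add_const d).exp.deriv).trans (by simp)
  refine ⟨fun t => Real.exp_pos _, by fun_prop, ?_, ?_, ?_, ?_⟩
  · refine ⟨convex_univ, fun x _ y _ a b ha hb hab => ?_⟩
    have := convexOn_exp.2 (mem_univ (c * x + d)) (mem_univ (c * y + d)) ha hb hab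
    refine le_trans (le_of_eq (congrArg Real.exp ?_)) this
    simp only [smul_eq_mul]
    linear_combination (-d) * hab
  · rw [hder]
    exact mul_ne_zero (Real.exp_pos _).ne' hc0
  · rw [mpAlpha, hder, chordSlope]
    have hp : 0 < M - m := sub_pos.2 hmM
    obtain hc | hc := hc0.lt_or_gt
    · refine div_nonneg_of_nonpos (div_nonpos_of_nonpos_of_nonneg ?_ hp.le)
        (mul_nonpos_of_nonneg_of_nonpos (Real.exp_pos _).le hc.le)
      rw [sub_nonpos, Real.exp_le_exp]
      nlinarith
    · refine div_nonneg (div_nonneg ?_ hp.le) (mul_nonneg (Real.exp_pos _).le hc.le)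
      rw [sub_nonneg, Real.exp_le_exp]
      nlinarith
  · intro s
    rw [hder]
    have h1 := mul_le_mul_of_nonneg_left (Real.add_one_le_exp (c * (s - t₀)))
      (Real.exp_pos (c * t₀ + d)).le
    rw [← Real.exp_add, show c * t₀ + d + c * (s - t₀) = c * s + d by ring] at h1
    linarith

/-- Log-convexity of `f` says that `f` lies below the log-affine interpolation of its endpoint
values. -/
lemma le_hhat_rpow {m M : ℝ} (hmM : m < M) {f : ℝ → ℝ} (hf_pos : ∀ t ∈ Icc m M, 0 < f t)
    (hf : ConvexOn ℝ (Icc m M) (fun t => Real.log (f t))) {t : ℝ} (ht : t ∈ Icc m M) :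
    f t ≤ (f M ^ (t - m) * f m ^ (M - t)) ^ (1 / (M - m)) := by
  have hp : 0 < M - m := sub_pos.2 hmM
  have hm' : m ∈ Icc m M := left_mem_Icc.2 hmM.le
  have hM' : M ∈ Icc m M := right_mem_Icc.2 hmM.le
  have ha : 0 ≤ (M - t) / (M - m) := div_nonneg (by linarith [ht.2]) hp.le
  have hb : 0 ≤ (t - m) / (M - m) := div_nonneg (by linarith [ht.1]) hp.le
  have h := hf.2 hm' hM' ha hb (by field_simp; ring)
  have e : ((M - t) / (M - m)) • m + ((t - m) / (M - m)) • M = t := by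
    simp only [smul_eq_mul]; field_simp; ring
  rw [e] at h
  rw [Real.rpow_def_of_pos (hf_pos M hM'), Real.rpow_def_of_pos (hf_pos m hm'), ← Real.exp_add,
    ← Real.exp_mul, ← Real.log_le_iff_le_exp (hf_pos t ht)]
  refine h.trans_eq ?_
  simp only [smul_eq_mul]; field_simp; ring

end

/-! ### The operator chain -/

theorem map_first_chain_large_interval
    {H K : Type*} [NormedAddCommGroup H] [InnerProductSpace ℂ H] [CompleteSpace H]
    [NormedAddCommGroup K] [InnerProductSpace ℂ K] [CompleteSpace K]
    (m M : ℝ) (hm : 0 < m) (hmM : m < M)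
    (f : ℝ → ℝ) (hf_cont : ContinuousOn f (Set.Icc m M))
    (hf_pos : ∀ t ∈ Set.Icc m M, 0 < f t)
    (hf_logconv : ConvexOn ℝ (Set.Icc m M) (fun t => Real.log (f t)))
    (A : H →L[ℂ] H) (hA : IsSelfAdjoint A)
    (hA₁ : m • (1 : H →L[ℂ] H) ≤ A) (hA₂ : A ≤ M • (1 : H →L[ℂ] H))
    (φ : (H →L[ℂ] H) →ₗ[ℂ] (K →L[ℂ] K))
    (hφ_pos : ∀ X : H →L[ℂ] H, 0 ≤ X → 0 ≤ φ X)
    (hφ_one : φ 1 = 1)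
    (hhat : ℝ → ℝ)
    (h_hhat : ∀ t, hhat t = f M ^ (t - m) * f m ^ (M - t))
    (t₀ : ℝ) (ht₀ : t₀ ∈ Set.Ioo m M)
    (hMm : 1 ≤ M - m) (hfmM : f m ≠ f M) :
    φ (cfc f A) ≤ cfc (fun s : ℝ => s ^ (1 / (M - m))) (φ (cfc hhat A)) ∧
      cfc (fun s : ℝ => s ^ (1 / (M - m))) (φ (cfc hhat A)) ≤
        cfc (fun s : ℝ => s ^ (1 / (M - m)))
          (mpAlpha m M hhat t₀ • cfc hhat (φ A) + mpBeta m M hhat t₀ • 1) := by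
  have hp : 0 < M - m := sub_pos.2 hmM
  have hr : 1 / (M - m) ∈ Set.Ioc (0 : ℝ) 1 := ⟨by positivity, (div_le_one hp).2 hMm⟩
  obtain ⟨h_pos, h_cont, h_conv, h_der, h_α, h_tan⟩ :=
    hhat_facts hmM (hf_pos m (Set.left_mem_Icc.2 hmM.le)) (hf_pos M (Set.right_mem_Icc.2 hmM.le))
      hfmM h_hhat t₀
  let Φ : (H →L[ℂ] H) →L[ℝ] (K →L[ℂ] K) :=
    ⟨φ.restrictScalars ℝ, map_continuous (PositiveLinearMap.mk₀ φ hφ_pos)⟩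
  have hΦ (x) : φ x = Φ x := rfl
  have hΦ_pos : ∀ X, 0 ≤ X → 0 ≤ Φ X := hφ_pos
  have hΦ_one : Φ 1 = 1 := hφ_one
  have hΦ_mono {X Y : H →L[ℂ] H} (h : X ≤ Y) : Φ X ≤ Φ Y := by
    have := hΦ_pos _ (sub_nonneg.2 h)
    rwa [map_sub, sub_nonneg] at this
  have hsA : ∀ x ∈ spectrum ℝ A, x ∈ Set.Icc m M := fun x hx =>
    ⟨(algebraMap_le_iff_le_spectrum hA).1 (by rwa [Algebra.algebraMap_eq_smul_one]) x hx,
      (le_algebraMap_iff_spectrum_le hA).1 (by rwa [Algebra.algebraMap_eq_smul_one]) x hx⟩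
  have hA0 : 0 ≤ A := le_trans (smul_nonneg hm.le zero_le_one) hA₁
  have hB : IsSelfAdjoint (Φ A) := .of_nonneg (hΦ_pos A hA0)
  have hX0 : 0 ≤ cfc hhat A := cfc_nonneg fun x _ => (h_pos x).le
  have hY0 := hΦ_pos _ hX0
  have hYZ : Φ (cfc hhat A) ≤
      mpAlpha m M hhat t₀ • cfc hhat (Φ A) + mpBeta m M hhat t₀ • 1 := by
    have h1 : cfc hhat A ≤ chordSlope m M hhat • A + chordIntercept m M hhat • 1 := by
      calc cfc hhat A ≤ cfc (fun t => chordSlope m M hhat * t + chordIntercept m M hhat) A :=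
            cfc_mono (fun x hx => le_chord hmM h_conv (hsA x hx)) (by fun_prop) (by fun_prop)
        _ = _ := by
            rw [cfc_add_const _ _ A, cfc_const_mul _ _ A, cfc_id' ℝ A,
              Algebra.algebraMap_eq_smul_one]
    refine (hΦ_mono h1).trans ?_
    rw [map_add, map_smul, map_smul, hΦ_one]
    calc chordSlope m M hhat • Φ A + chordIntercept m M hhat • 1
        = cfc (fun t => chordSlope m M hhat * t + chordIntercept m M hhat) (Φ A) := by
          rw [cfc_add_const _ _ (Φ A), cfc_const_mul _ _ (Φ A), cfc_id' ℝ (Φ A),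
              Algebra.algebraMap_eq_smul_one]
      _ ≤ cfc (fun t => mpAlpha m M hhat t₀ * hhat t + mpBeta m M hhat t₀) (Φ A) :=
          cfc_mono (fun x _ => chord_le_mond_pecaric h_der h_α h_tan x)
            (by fun_prop) (by fun_prop)
      _ = _ := by
          rw [cfc_add_const _ _ (Φ A), cfc_const_mul _ _ (Φ A),
            Algebra.algebraMap_eq_smul_one]
  simp only [hΦ]
  rw [← CFC.rpow_eq_cfc_real hY0, ← CFC.rpow_eq_cfc_real (hY0.trans hYZ)]
  refine ⟨?_, CFC.rpow_le_rpow ⟨hr.1.le, hr.2⟩ hYZ⟩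
  calc Φ (cfc f A) ≤ Φ (cfc (fun t => hhat t ^ (1 / (M - m))) A) :=
        hΦ_mono <| cfc_mono
          (fun x hx => by rw [h_hhat]; exact le_hhat_rpow hmM hf_pos hf_logconv (hsA x hx))
          (hf_cont.mono hsA)
          (h_cont.rpow_const fun x => Or.inl (h_pos x).ne').continuousOn
    _ = Φ (cfc hhat A ^ (1 / (M - m))) := by
        rw [CFC.cfc_rpow (fun x _ => h_pos x) h_cont.continuousOn hA]
    _ ≤ _ := map_rpow_le_s15 Φ hΦ_pos hΦ_one hX0 hr
end

section
/- Let 0 < m < M, let f : [m,M] → (0,∞) be continuous, convex, and either increasing or decreasing on [m,M]. Let A be a bounded self-adjoint operator on a complex Hilbert space H with mI ≤ A ≤ MI, and let φ : B(H) → B(K) be a normalized positive linear map. Define the operator A_min as the continuous functional calculus of the function t ↦ ((M − m − |M + m − 2t|)/(M − m)) · ((f(m) + f(M))/2 − f((m+M)/2)) applied to A (this function equals (2·min{t−m, M−t}/(M−m)) · ((f(m)+f(M))/2 − f((m+M)/2))). Then for any t₀ ∈ (m,M) at which f is differentiable with f′(t₀) ≠ 0, one has φ(f(A)) + φ(A_min)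 ≤ α(f,t₀) · f(φ(A)) + β(f,t₀)·I. -/
/-- The tent term is the gap between the chord of `f` over `[m, M]` and the two half-chords
through the midpoint, so this is convexity on each half. -/
lemma ConvexOn.add_tent_le_chord {m M : ℝ} (hmM : m < M) {f : ℝ → ℝ}
    (hf : ConvexOn ℝ (Set.Icc m M) f) {t : ℝ} (ht : t ∈ Set.Icc m M) :
    f t + (M - m - |M + m - 2 * t|) / (M - m) * ((f m + f M) / 2 - f ((m + M) / 2))
      ≤ chordSlope m M f * t + chordIntercept m M f := by
  obtain ⟨h1, h2⟩ := ht
  have hd : 0 < M - m := sub_pos.2 hmM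
  have hmid : (m + M) / 2 ∈ Set.Icc m M := ⟨by linarith, by linarith⟩
  have hchord : chordSlope m M f * t + chordIntercept m M f
      = f m + (t - m) / (M - m) * (f M - f m) := by
    unfold chordSlope chordIntercept
    field_simp
    ring
  rw [hchord]
  rcases le_total t ((m + M) / 2) with h | h
  · rw [abs_of_nonneg (by linarith)]
    obtain ⟨c, rfl⟩ : ∃ c, t = m + c * (M - m) := ⟨(t - m) / (M - m), by field_simp; ring⟩
    have hc0 : 0 ≤ c := by by_contra! hc; nlinarith
    have hc1 : 2 * c ≤ 1 := by by_contra! hc; nlinarith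
    have key := hf.2 (Set.left_mem_Icc.2 hmM.le) hmid
      (show 0 ≤ 1 - 2 * c by linarith) (show 0 ≤ 2 * c by linarith) (by ring)
    simp only [smul_eq_mul] at key
    rw [show (1 - 2 * c) * m + 2 * c * ((m + M) / 2) = m + c * (M - m) by ring] at key
    rw [show (M - m - (M + m - 2 * (m + c * (M - m)))) / (M - m) = 2 * c by field_simp; ring,
      show (m + c * (M - m) - m) / (M - m) = c by field_simp; ring]
    linarith
  · rw [abs_of_nonpos (by linarith)]
    obtain ⟨c, rfl⟩ : ∃ c, t = M - c * (M - m) := ⟨(M - t) / (M - m), by field_simp; ring⟩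
    have hc0 : 0 ≤ c := by by_contra! hc; nlinarith
    have hc1 : 2 * c ≤ 1 := by by_contra! hc; nlinarith
    have key := hf.2 (Set.right_mem_Icc.2 hmM.le) hmid
      (show 0 ≤ 1 - 2 * c by linarith) (show 0 ≤ 2 * c by linarith) (by ring)
    simp only [smul_eq_mul] at key
    rw [show (1 - 2 * c) * M + 2 * c * ((m + M) / 2) = M - c * (M - m) by ring] at key
    rw [show (M - m - -(M + m - 2 * (M - c * (M - m)))) / (M - m) = 2 * c by field_simp; ring,
      show (M - c * (M - m) - m) / (M - m) = 1 - c by field_simp; ring]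
    linarith

lemma ConvexOn.tangent_le {s : Set ℝ} {f : ℝ → ℝ} (hf : ConvexOn ℝ s f) {x y : ℝ}
    (hx : x ∈ s) (hy : y ∈ s) (hd : DifferentiableAt ℝ f x) :
    f x + deriv f x * (y - x) ≤ f y := by
  rcases lt_trichotomy y x with h | rfl | h
  · have := hf.slope_le_of_hasDerivAt hy hx h hd.hasDerivAt
    rw [slope_def_field, div_le_iff₀ (by linarith)] at this
    linarith
  · simp
  · have := hf.le_slope_of_hasDerivAt hx hy h hd.hasDerivAt
    rw [slope_def_field, le_div_iff₀ (by linarith)] at this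
    linarith

/-- Tangent line bound at `t₀`, scaled by `α ≥ 0`; the sign of `α` comes from monotonicity. -/
lemma chord_le_mpAlpha_mul_add_mpBeta {m M : ℝ} (hmM : m < M) {f : ℝ → ℝ}
    (hf : ConvexOn ℝ (Set.Icc m M) f)
    (hmono : MonotoneOn f (Set.Icc m M) ∨ AntitoneOn f (Set.Icc m M))
    {t₀ : ℝ} (ht₀ : t₀ ∈ Set.Ioo m M) (hdiff : DifferentiableAt ℝ f t₀)
    (hderiv : deriv f t₀ ≠ 0) {s : ℝ} (hs : s ∈ Set.Icc m M) :
    chordSlope m M f * s + chordIntercept m M f ≤ mpAlpha m M f t₀ * f s + mpBeta m M f t₀ := by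
  have hm' := Set.left_mem_Icc.2 hmM.le
  have hM' := Set.right_mem_Icc.2 hmM.le
  have ht' := Set.Ioo_subset_Icc_self ht₀
  have hα : 0 ≤ mpAlpha m M f t₀ := by
    unfold mpAlpha chordSlope
    rcases hmono with h | h
    · refine div_nonneg (div_nonneg (sub_nonneg.2 (h hm' hM' hmM.le)) (by linarith)) ?_
      have h1 := hf.tangent_le ht' hm' hdiff
      have h2 := h hm' ht' ht'.1
      by_contra! h3
      nlinarith [ht₀.1]
    · refine div_nonneg_of_nonpos (div_nonpos_of_nonpos_of_nonneg
        (sub_nonpos.2 (h hm' hM' hmM.le)) (by linarith)) ?_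
      have h1 := hf.tangent_le ht' hM' hdiff
      have h2 := h ht' hM' ht'.2
      by_contra! h3
      nlinarith [ht₀.2]
  have hαd : mpAlpha m M f t₀ * deriv f t₀ = chordSlope m M f := div_mul_cancel₀ _ hderiv
  have hβ : mpBeta m M f t₀
      = chordSlope m M f * t₀ + chordIntercept m M f - mpAlpha m M f t₀ * f t₀ := by
    unfold mpBeta mpAlpha
    ring
  have h1 := mul_le_mul_of_nonneg_left (hf.tangent_le ht' hs hdiff) hα
  rw [mul_add, ← mul_assoc, hαd] at h1
  rw [hβ]
  linarith

lemma spectrum_subset_Icc_of_le_s19 {H : Type*} [NormedAddCommGroup H] [InnerProductSpace ℂ H]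
    [CompleteSpace H] {m M : ℝ} {A : H →L[ℂ] H} (hA : IsSelfAdjoint A)
    (hA₁ : m • (1 : H →L[ℂ] H) ≤ A) (hA₂ : A ≤ M • (1 : H →L[ℂ] H)) :
    spectrum ℝ A ⊆ Set.Icc m M := by
  rw [← Algebra.algebraMap_eq_smul_one] at hA₁ hA₂
  exact fun x hx => ⟨(algebraMap_le_iff_le_spectrum hA).1 hA₁ x hx,
    (le_algebraMap_iff_spectrum_le hA).1 hA₂ x hx⟩


theorem refined_mond_pecaric_convex_map_side
    {H K : Type*} [NormedAddCommGroup H] [InnerProductSpace ℂ H] [CompleteSpace H]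
    [NormedAddCommGroup K] [InnerProductSpace ℂ K] [CompleteSpace K]
    (m M : ℝ) (hm : 0 < m) (hmM : m < M)
    (f : ℝ → ℝ) (hf_cont : ContinuousOn f (Set.Icc m M))
    (hf_pos : ∀ t ∈ Set.Icc m M, 0 < f t)
    (hf_conv : ConvexOn ℝ (Set.Icc m M) f)
    (hf_mono : MonotoneOn f (Set.Icc m M) ∨ AntitoneOn f (Set.Icc m M))
    (A : H →L[ℂ] H) (hA : IsSelfAdjoint A)
    (hA₁ : m • (1 : H →L[ℂ] H) ≤ A) (hA₂ : A ≤ M • (1 : H →L[ℂ] H))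
    (φ : (H →L[ℂ] H) →ₗ[ℂ] (K →L[ℂ] K))
    (hφ_pos : ∀ X : H →L[ℂ] H, 0 ≤ X → 0 ≤ φ X)
    (hφ_one : φ 1 = 1)
    (Amin : H →L[ℂ] H)
    (hAmin : Amin = cfc (fun t : ℝ =>
      (M - m - |M + m - 2 * t|) / (M - m) * ((f m + f M) / 2 - f ((m + M) / 2))) A)
    (t₀ : ℝ) (ht₀ : t₀ ∈ Set.Ioo m M) (hdiff : DifferentiableAt ℝ f t₀)
    (hderiv : deriv f t₀ ≠ 0) :
    φ (cfc f A) + φ Amin ≤ mpAlpha m M f t₀ • cfc f (φ A) + mpBeta m M f t₀ • 1 := by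
  have hpos : ∀ X Y : H →L[ℂ] H, X ≤ Y → φ X ≤ φ Y := fun X Y h => by
    simpa using hφ_pos (Y - X) (sub_nonneg.2 h)
  have hsmul : ∀ (r : ℝ) (X : H →L[ℂ] H), φ (r • X) = r • φ X :=
    fun r X => φ.map_smul_of_tower r X
  have hspec := spectrum_subset_Icc_of_le_s19 hA hA₁ hA₂
  have hA_nonneg : 0 ≤ A := by
    rw [StarOrderedRing.nonneg_iff_spectrum_nonneg (R := ℝ) A hA]
    exact fun x hx => hm.le.trans (hspec hx).1
  have hB : IsSelfAdjoint (φ A) := IsSelfAdjoint.of_nonneg (hφ_pos A hA_nonneg)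
  have hspecB : spectrum ℝ (φ A) ⊆ Set.Icc m M := by
    refine spectrum_subset_Icc_of_le_s19 hB ?_ ?_
    · simpa [hsmul, hφ_one] using hpos _ _ hA₁
    · simpa [hsmul, hφ_one] using hpos _ _ hA₂
  have hcont := hf_cont.mono hspec
  have hcontB := hf_cont.mono hspecB
  have hleft : cfc f A + Amin ≤ chordSlope m M f • A + chordIntercept m M f • 1 := by
    have hlin : chordSlope m M f • A + chordIntercept m M f • 1
        = cfc (fun t : ℝ => chordSlope m M f * t + chordIntercept m M f) A := by
      rw [cfc_add_const _ _ A, cfc_const_mul_id _ A, Algebra.algebraMap_eq_smul_one]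
    rw [hAmin, hlin, ← cfc_add A f _ hcont (by fun_prop)]
    refine cfc_mono (fun t ht => hf_conv.add_tent_le_chord hmM (hspec ht)) ?_ (by fun_prop)
    exact hcont.add (by fun_prop)
  have hright : chordSlope m M f • φ A + chordIntercept m M f • 1
      ≤ mpAlpha m M f t₀ • cfc f (φ A) + mpBeta m M f t₀ • 1 := by
    have hlin : chordSlope m M f • φ A + chordIntercept m M f • 1
        = cfc (fun t : ℝ => chordSlope m M f * t + chordIntercept m M f) (φ A) := by
      rw [cfc_add_const _ _ (φ A), cfc_const_mul_id _ (φ A), Algebra.algebraMap_eq_smul_one]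
    have hlin' : mpAlpha m M f t₀ • cfc f (φ A) + mpBeta m M f t₀ • 1
        = cfc (fun t : ℝ => mpAlpha m M f t₀ * f t + mpBeta m M f t₀) (φ A) := by
      rw [cfc_add_const _ _ (φ A) (by fun_prop), cfc_const_mul _ _ (φ A),
        Algebra.algebraMap_eq_smul_one]
    rw [hlin, hlin']
    exact cfc_mono (fun t ht => chord_le_mpAlpha_mul_add_mpBeta hmM hf_conv hf_mono ht₀ hdiff
      hderiv (hspecB ht)) (by fun_prop) (by fun_prop)
  refine le_trans ?_ hright
  simpa [hsmul, hφ_one] using hpos _ _ hleft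
end
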